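/- Let f be a positive continuous function on [0,∞) satisfying Condition A, let φ be a branching mechanism (with Lévy measure m) satisfying Grey's condition, and let (Q_t)_{t≥0} be the transition semigroup of the CB-process with branching mechanism φ. Let μ be a probability measure on [0,∞) with μ((0,∞)) > 0 (the law of the initial state X_0). Then for every t > 0, the f-moment ∫_{[0,∞)} ∫_{[0,∞)} f(y) Q_t(x,dy) μ(dx) is finite if and only if ∫_{[0,∞)} f(x) μ(dx) < ∞ and ∫_{(1,∞)} f(z) m(dz) < ∞. -/

import Mathlib

open MeasureTheory Set Filter

noncomputable section

/-- A positive continuous function on `[0,∞)` satisfying Condition A: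
there exist `c ≥ 0` and `K > 0` such that `f` is convex on `[c,∞)`,
`f (x*y) ≤ K * f x * f y` for `x, y ∈ [c,∞)`, and `f` is bounded on `[0,c)`. -/
def ConditionA (f : ℝ → ℝ) : Prop :=
  ContinuousOn f (Set.Ici 0) ∧ (∀ x, 0 ≤ x → 0 < f x) ∧
  ∃ c, 0 ≤ c ∧ ∃ K, 0 < K ∧
    ConvexOn ℝ (Set.Ici c) f ∧
    (∀ x y, c ≤ x → c ≤ y → f (x * y) ≤ K * f x * f y) ∧
    ∃ M, ∀ x, 0 ≤ x → x < c → f x ≤ M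

/-- Condition B with constant `K`: `f` is convex and nondecreasing on `[0,∞)`,
submultiplicative up to the constant `K`, and `f > 1` on `[0,∞)`. -/
def ConditionB (f : ℝ → ℝ) (K : ℝ) : Prop :=
  0 < K ∧ ConvexOn ℝ (Set.Ici 0) f ∧ MonotoneOn f (Set.Ici 0) ∧
  (∀ x y, 0 ≤ x → 0 ≤ y → f (x * y) ≤ K * f x * f y) ∧
  (∀ x, 0 ≤ x → 1 < f x)

/-- `φ` is a branching mechanism with parameters `β ∈ ℝ`, `σ ≥ 0` and Lévy
measure `m` (a σ-finite measure carried by `(0,∞)` with `∫ 1 ∧ z² m(dz) < ∞`):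
`φ(λ) = βλ + σ²λ²/2 + ∫ (e^{-zλ} - 1 + zλ 1_{z ≤ 1}) m(dz)`. -/
structure IsBranchingMechanism (φ : ℝ → ℝ) (β σ : ℝ) (m : Measure ℝ) : Prop where
  sigma_nonneg : 0 ≤ σ
  sigmaFinite : SigmaFinite m
  carrier : m (Set.Iic 0) = 0
  levy_finite : ∫⁻ z, ENNReal.ofReal (min 1 (z ^ 2)) ∂m < ⊤
  form : ∀ l, 0 ≤ l →
    φ l = β * l + σ ^ 2 * l ^ 2 / 2
      + ∫ z, (Real.exp (-(z * l)) - 1 + (if z ≤ 1 then z * l else 0)) ∂m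

/-- Grey's condition: `∫_{0+} φ(λ)⁻¹ dλ = ∞`, i.e. `φ⁻¹` fails to be
integrable on every right neighbourhood of `0`. -/
def GreyCondition (φ : ℝ → ℝ) : Prop :=
  ∀ ε, 0 < ε → ¬ IntegrableOn (fun l => (φ l)⁻¹) (Set.Ioo 0 ε) volume

/-- `v t l` is the nonnegative solution of `v_t(λ) = λ - ∫_0^t φ(v_s(λ)) ds`. -/
def IsCumulant (φ : ℝ → ℝ) (v : ℝ → ℝ → ℝ) : Prop :=
  ∀ l, 0 ≤ l → ∀ t, 0 ≤ t →
    0 ≤ v t l ∧ v t l = l - ∫ s in (0:ℝ)..t, φ (v s l)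

/-- `(Q t)_{t ≥ 0}` is the transition semigroup of the CB-process with cumulant
`v`: each `Q t x` is a probability measure on `[0,∞)` with Laplace transform
`∫ e^{-λ y} Q_t(x, dy) = e^{-x v_t(λ)}`. -/
def IsCBSemigroup (v : ℝ → ℝ → ℝ) (Q : ℝ → ℝ → Measure ℝ) : Prop :=
  ∀ t x, 0 ≤ t → 0 ≤ x →
    IsProbabilityMeasure (Q t x) ∧ Q t x (Set.Iio 0) = 0 ∧
    ∀ l, 0 ≤ l → ∫ y, Real.exp (-(l * y)) ∂(Q t x) = Real.exp (-(x * v t l))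

/-- `ψ` is an immigration mechanism with drift `h ≥ 0` and immigration measure
`ν` (a σ-finite measure carried by `(0,∞)` with `∫ 1 ∧ z ν(dz) < ∞`):
`ψ(λ) = hλ + ∫ (1 - e^{-λz}) ν(dz)`. -/
structure IsImmigrationMechanism (ψ : ℝ → ℝ) (h : ℝ) (ν : Measure ℝ) : Prop where
  h_nonneg : 0 ≤ h
  sigmaFinite : SigmaFinite ν
  carrier : ν (Set.Iic 0) = 0
  levy_finite : ∫⁻ z, ENNReal.ofReal (min 1 z) ∂ν < ⊤
  form : ∀ l, 0 ≤ l → ψ l = h * l + ∫ z, (1 - Real.exp (-(l * z))) ∂ν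

/-- `(Q^γ t)_{t ≥ 0}` is the transition semigroup of the CBI-process with
cumulant `v` and immigration mechanism `ψ`: each `Qγ t x` is a probability
measure on `[0,∞)` with Laplace transform
`∫ e^{-λ y} Q^γ_t(x, dy) = exp(-x v_t(λ) - ∫_0^t ψ(v_s(λ)) ds)`. -/
def IsCBISemigroup (v : ℝ → ℝ → ℝ) (ψ : ℝ → ℝ) (Qγ : ℝ → ℝ → Measure ℝ) : Prop :=
  ∀ t x, 0 ≤ t → 0 ≤ x →
    IsProbabilityMeasure (Qγ t x) ∧ Qγ t x (Set.Iio 0) = 0 ∧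
    ∀ l, 0 ≤ l →
      ∫ y, Real.exp (-(l * y)) ∂(Qγ t x)
        = Real.exp (-(x * v t l) - ∫ s in (0:ℝ)..t, ψ (v s l))

/-!
The test functions `q = (1 - exp (-l * y)) ^ n` are linear combinations of exponentials, so their
moments `E_x q (X_t)` are explicit in the cumulant semigroup, whose flow turns into a forward
equation for them. Bounds on the generator and Grönwall's inequality then show that `E_x q (X_t)`
is at most a constant, independent of `l`, times `q x + l ^ n + x * ∫_{(1,∞)} q dm`; conversely
`∫_{(1,∞)} q dm` is at most a constant times `E_x q (X_t) + l ^ n` when `t, x > 0` and `l ≤ 1`.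

Let `g` be monotone with `g (2 * x) ≤ D * g x`. If `2 * D ≤ 2 ^ n`, then up to additive and
multiplicative constants `g` is the series of the test functions with `l = 2 ^ (-i)` and weights
`g (2 ^ (i + 1)) - g (2 ^ i)`, so both estimates pass to `g`. That a finite moment at time `t`
forces a finite moment of the initial law follows from Markov's inequality for `exp (-X_t / x)`:
`X_t` exceeds a fixed multiple of `x` with probability bounded below.

A function satisfying Condition A is either nonincreasing on `[c,∞)`, hence bounded, or differs by
a bounded amount from a monotone doubling function that dominates a multiple of the identity.
-/

/-! ### Branching mechanisms -/

lemma exp_neg_sub_one_add_nonneg (u : ℝ) : 0 ≤ Real.exp (-u) - 1 + u := by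
  linarith [Real.add_one_le_exp (-u)]

lemma exp_neg_sub_one_add_le_sq {u : ℝ} (hu : 0 ≤ u) : Real.exp (-u) - 1 + u ≤ u ^ 2 := by
  rcases le_total u 1 with h | h
  · have := Real.abs_exp_sub_one_sub_id_le (x := -u) (by rwa [abs_neg, abs_of_nonneg hu])
    nlinarith [(abs_le.1 this).2]
  · nlinarith [Real.exp_le_one_iff.2 (neg_nonpos.2 hu)]

/-- The integrand of the Lévy–Khintchine representation of a branching mechanism, compensated on
the small jumps `z ≤ 1` only. -/
def levyKernel (z l : ℝ) : ℝ := Real.exp (-(z * l)) - 1 + if z ≤ 1 then z * l else 0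

lemma measurable_levyKernel (l : ℝ) : Measurable fun z => levyKernel z l :=
  Measurable.add (by fun_prop) (Measurable.ite measurableSet_Iic (by fun_prop) measurable_const)

lemma continuous_levyKernel (z : ℝ) : Continuous (levyKernel z) := by
  unfold levyKernel
  split_ifs <;> fun_prop

lemma convexOn_levyKernel (z : ℝ) : ConvexOn ℝ univ (levyKernel z) := by
  have hexp : ConvexOn ℝ univ fun l => Real.exp (-(z * l)) := by
    simpa [Function.comp_def] using convexOn_exp.comp_linearMap (LinearMap.mulLeft ℝ (-z))
  have hlin : ConvexOn ℝ univ fun l => if z ≤ 1 then z * l else 0 := by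
    split_ifs
    · exact (LinearMap.mulLeft ℝ z).convexOn convex_univ
    · exact convexOn_const 0 convex_univ
  exact ((hexp.add_const (-1)).add hlin).congr fun l _ => by simp [levyKernel, sub_eq_add_neg]

lemma abs_levyKernel_le {z l : ℝ} (hz : 0 < z) (hl : 0 ≤ l) :
    |levyKernel z l| ≤ (1 + l ^ 2) * min 1 (z ^ 2) := by
  have hzl : 0 ≤ z * l := by positivity
  unfold levyKernel
  split_ifs with h
  · rw [abs_of_nonneg (exp_neg_sub_one_add_nonneg _), min_eq_right (by nlinarith)]
    nlinarith [exp_neg_sub_one_add_le_sq hzl]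
  · rw [min_eq_left (by nlinarith), add_zero, abs_le]
    constructor <;> nlinarith [Real.exp_le_one_iff.2 (neg_nonpos.2 hzl), Real.exp_pos (-(z * l))]

lemma neg_min_le_levyKernel (z l : ℝ) : -min 1 (z ^ 2) ≤ levyKernel z l := by
  unfold levyKernel
  split_ifs with h
  · have : 0 ≤ min 1 (z ^ 2) := by positivity
    linarith [exp_neg_sub_one_add_nonneg (z * l)]
  · rw [min_eq_left (by nlinarith), add_zero]
    linarith [Real.exp_pos (-(z * l))]

lemma neg_indicator_mul_le_levyKernel (z l : ℝ) :
    -((Ioi (1 : ℝ)).indicator id z * l) ≤ levyKernel z l := by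
  have hexp := exp_neg_sub_one_add_nonneg (z * l)
  unfold levyKernel
  by_cases h : z ≤ 1
  · rw [indicator_of_notMem (by simpa using h), if_pos h]
    linarith
  · rw [indicator_of_mem (by simpa using h), if_neg h, id]
    linarith

namespace IsBranchingMechanism

variable {φ : ℝ → ℝ} {β σ : ℝ} {m : Measure ℝ}

lemma ae_pos (hφ : IsBranchingMechanism φ β σ m) : ∀ᵐ z ∂m, 0 < z := by
  simpa [ae_iff, Iic_def] using hφ.carrier

lemma integrable_min (hφ : IsBranchingMechanism φ β σ m) :
    Integrable (fun z : ℝ => min 1 (z ^ 2)) m := by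
  refine ⟨by fun_prop, ?_⟩
  rw [hasFiniteIntegral_iff_ofReal (ae_of_all _ fun z => by positivity)]
  exact hφ.levy_finite

lemma measure_Ioi_lt_top (hφ : IsBranchingMechanism φ β σ m) : m (Ioi 1) < ⊤ :=
  calc m (Ioi 1) = ∫⁻ _ in Ioi (1 : ℝ), 1 ∂m := by simp
    _ ≤ ∫⁻ z in Ioi (1 : ℝ), ENNReal.ofReal (min 1 (z ^ 2)) ∂m := by
      refine setLIntegral_mono' measurableSet_Ioi fun z (hz : 1 < z) => ?_
      rw [min_eq_left (by nlinarith), ENNReal.ofReal_one]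
    _ ≤ ∫⁻ z, ENNReal.ofReal (min 1 (z ^ 2)) ∂m := setLIntegral_le_lintegral _ _
    _ < ⊤ := hφ.levy_finite

lemma integrable_levyKernel (hφ : IsBranchingMechanism φ β σ m) {l : ℝ} (hl : 0 ≤ l) :
    Integrable (fun z => levyKernel z l) m := by
  refine (hφ.integrable_min.const_mul (1 + l ^ 2)).mono'
    (measurable_levyKernel l).aestronglyMeasurable ?_
  filter_upwards [hφ.ae_pos] with z hz using abs_levyKernel_le hz hl

lemma eq_integral_levyKernel (hφ : IsBranchingMechanism φ β σ m) {l : ℝ} (hl : 0 ≤ l) :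
    φ l = β * l + σ ^ 2 * l ^ 2 / 2 + ∫ z, levyKernel z l ∂m :=
  hφ.form l hl

lemma map_zero (hφ : IsBranchingMechanism φ β σ m) : φ 0 = 0 := by
  simp [hφ.eq_integral_levyKernel le_rfl, levyKernel]

lemma convexOn_integral_levyKernel (hφ : IsBranchingMechanism φ β σ m) :
    ConvexOn ℝ (Ici 0) fun l => ∫ z, levyKernel z l ∂m := by
  refine ⟨convex_Ici 0, fun a ha b hb s t hs ht hst => ?_⟩
  have ha' := (hφ.integrable_levyKernel ha).const_mul s
  have hb' := (hφ.integrable_levyKernel hb).const_mul t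
  simp only [smul_eq_mul, ← integral_const_mul]
  rw [← integral_add ha' hb']
  refine integral_mono (hφ.integrable_levyKernel (convex_Ici 0 ha hb hs ht hst))
    (ha'.add hb') fun z => ?_
  exact (convexOn_levyKernel z).2 (mem_univ a) (mem_univ b) hs ht hst

lemma convexOn (hφ : IsBranchingMechanism φ β σ m) : ConvexOn ℝ (Ici 0) φ := by
  have hlin : ConvexOn ℝ (Ici 0) fun l : ℝ => β * l :=
    (LinearMap.mulLeft ℝ β).convexOn (convex_Ici 0)
  have hsq : ConvexOn ℝ (Ici 0) fun l : ℝ => σ ^ 2 * l ^ 2 / 2 := by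
    refine ((convexOn_pow 2).smul (by positivity : 0 ≤ σ ^ 2 / 2)).congr fun l _ => ?_
    simp only [smul_eq_mul]
    ring
  exact ((hlin.add hsq).add hφ.convexOn_integral_levyKernel).congr
    fun l hl => (hφ.eq_integral_levyKernel hl).symm

lemma continuousOn_integral_levyKernel (hφ : IsBranchingMechanism φ β σ m) (b : ℝ) :
    ContinuousOn (fun l => ∫ z, levyKernel z l ∂m) (Icc 0 b) := by
  refine continuousOn_of_dominated (bound := fun z => (1 + b ^ 2) * min 1 (z ^ 2))
    (fun l _ => (measurable_levyKernel l).aestronglyMeasurable) (fun l hl => ?_)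
    (hφ.integrable_min.const_mul _) (ae_of_all _ fun z => (continuous_levyKernel z).continuousOn)
  filter_upwards [hφ.ae_pos] with z hz
  refine (abs_levyKernel_le hz hl.1).trans ?_
  gcongr
  exacts [hl.1, hl.2]

lemma continuousOn (hφ : IsBranchingMechanism φ β σ m) : ContinuousOn φ (Ici 0) := by
  intro l hl
  have hIcc : ContinuousOn φ (Icc 0 (l + 1)) := by
    refine ContinuousOn.congr ?_ fun u hu => hφ.eq_integral_levyKernel hu.1
    exact (by fun_prop : Continuous fun u => β * u + σ ^ 2 * u ^ 2 / 2).continuousOn.add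
      (hφ.continuousOn_integral_levyKernel _)
  refine (hIcc l ⟨hl, by linarith⟩).mono_of_mem_nhdsWithin ?_
  rw [← Ici_inter_Iic]
  exact inter_mem self_mem_nhdsWithin (mem_nhdsWithin_of_mem_nhds (Iic_mem_nhds (by linarith)))

lemma exists_lipschitzOnWith (hφ : IsBranchingMechanism φ β σ m) {a b : ℝ} (ha : 0 < a) :
    ∃ L, LipschitzOnWith L φ (Icc a b) := by
  refine LocallyLipschitzOn.exists_lipschitzOnWith_of_compact isCompact_Icc ?_
  exact ((hφ.convexOn.subset Ioi_subset_Ici_self (convex_Ioi 0)).locallyLipschitzOn isOpen_Ioi).mono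
    fun l hl => ha.trans_le hl.1

lemma exists_le_mul (hφ : IsBranchingMechanism φ β σ m) (b : ℝ) :
    ∃ C, 0 ≤ C ∧ ∀ u ∈ Icc 0 b, φ u ≤ C * u := by
  rcases le_or_gt b 0 with hb | hb
  · refine ⟨0, le_rfl, fun u hu => ?_⟩
    rw [le_antisymm (hu.2.trans hb) hu.1, hφ.map_zero, zero_mul]
  refine ⟨max (φ b) 0 / b, by positivity, fun u hu => ?_⟩
  have hconv := hφ.convexOn.2 (mem_Ici.2 le_rfl) (mem_Ici.2 hb.le)
    (sub_nonneg.2 (div_le_one_of_le₀ hu.2 hb.le)) (div_nonneg hu.1 hb.le) (sub_add_cancel _ _)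
  calc φ u ≤ u / b * φ b := by simpa [hφ.map_zero, hb.ne'] using hconv
    _ ≤ u / b * max (φ b) 0 := by gcongr; exacts [div_nonneg hu.1 hb.le, le_max_left _ _]
    _ = max (φ b) 0 / b * u := by ring

lemma exists_neg_le (hφ : IsBranchingMechanism φ β σ m) :
    ∃ A, 0 ≤ A ∧ ∀ u, 0 ≤ u → -(A * (1 + u)) ≤ φ u := by
  have hI : 0 ≤ ∫ z : ℝ, min 1 (z ^ 2) ∂m := integral_nonneg fun z => by positivity
  refine ⟨|β| + ∫ z : ℝ, min 1 (z ^ 2) ∂m, by positivity, fun u hu => ?_⟩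
  have hker : -(∫ z : ℝ, min 1 (z ^ 2) ∂m) ≤ ∫ z, levyKernel z u ∂m := by
    rw [← integral_neg]
    exact integral_mono hφ.integrable_min.neg (hφ.integrable_levyKernel hu)
      fun z => neg_min_le_levyKernel z u
  rw [hφ.eq_integral_levyKernel hu]
  nlinarith [neg_abs_le β, abs_nonneg β, sq_nonneg (σ * u)]

lemma exists_neg_mul_le (hφ : IsBranchingMechanism φ β σ m) (hm : IntegrableOn id (Ioi 1) m) :
    ∃ A, 0 ≤ A ∧ ∀ u, 0 ≤ u → -(A * u) ≤ φ u := by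
  have hm' : Integrable ((Ioi (1 : ℝ)).indicator id) m :=
    (integrable_indicator_iff measurableSet_Ioi).2 hm
  have hI : 0 ≤ ∫ z, (Ioi (1 : ℝ)).indicator id z ∂m :=
    integral_nonneg (indicator_nonneg fun z (hz : 1 < z) => zero_le_one.trans hz.le)
  refine ⟨|β| + ∫ z, (Ioi (1 : ℝ)).indicator id z ∂m, by positivity, fun u hu => ?_⟩
  have hker : -((∫ z, (Ioi (1 : ℝ)).indicator id z ∂m) * u) ≤ ∫ z, levyKernel z u ∂m := by
    rw [← integral_mul_const, ← integral_neg]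
    exact integral_mono (hm'.mul_const u).neg (hφ.integrable_levyKernel hu)
      fun z => neg_indicator_mul_le_levyKernel z u
  rw [hφ.eq_integral_levyKernel hu]
  nlinarith [neg_abs_le β, sq_nonneg (σ * u)]

end IsBranchingMechanism

/-! ### Differential inequalities -/

section Gronwall

variable {h h' : ℝ → ℝ} {t C D E : ℝ}

lemma le_of_hasDerivAt_nonpos (ht : 0 ≤ t) (hc : ContinuousOn h (Icc 0 t))
    (hd : ∀ s ∈ Ioo 0 t, HasDerivAt h (h' s) s) (hle : ∀ s ∈ Ioo 0 t, h' s ≤ 0) : h t ≤ h 0 := by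
  refine antitoneOn_of_hasDerivWithinAt_nonpos (f' := h') (convex_Icc 0 t) hc ?_ ?_
    (left_mem_Icc.2 ht) (right_mem_Icc.2 ht) ht <;> rw [interior_Icc]
  exacts [fun s hs => (hd s hs).hasDerivWithinAt, hle]

lemma le_exp_mul_of_hasDerivAt_le (hC : 0 ≤ C) (hD : 0 ≤ D) (ht : 0 ≤ t)
    (hc : ContinuousOn h (Icc 0 t)) (hd : ∀ s ∈ Ioo 0 t, HasDerivAt h (h' s) s)
    (hle : ∀ s ∈ Ioo 0 t, h' s ≤ C * h s + D) : h t ≤ Real.exp (C * t) * (h 0 + D * t) := by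
  have hdecr : Real.exp (-(C * t)) * h t - D * t ≤ Real.exp (-(C * 0)) * h 0 - D * 0 := by
    refine le_of_hasDerivAt_nonpos (h := fun s => Real.exp (-(C * s)) * h s - D * s) ht
      (by fun_prop) (fun s hs => ((((hasDerivAt_id s).const_mul C).neg.exp).mul (hd s hs)).sub
      ((hasDerivAt_id s).const_mul D)) fun s hs => ?_
    have hexp : Real.exp (-(C * s)) ≤ 1 :=
      Real.exp_le_one_iff.2 (neg_nonpos.2 (mul_nonneg hC hs.1.le))
    simp only [Pi.neg_apply, id]
    nlinarith [hle s hs, Real.exp_pos (-(C * s))]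
  have hinv : Real.exp (C * t) * Real.exp (-(C * t)) = 1 := by simp [← Real.exp_add]
  calc h t = Real.exp (C * t) * (Real.exp (-(C * t)) * h t) := by rw [← mul_assoc, hinv, one_mul]
    _ ≤ Real.exp (C * t) * (h 0 + D * t) := by
      gcongr
      simp only [mul_zero, neg_zero, Real.exp_zero, one_mul] at hdecr
      linarith

lemma add_mul_le_exp_mul_of_le_hasDerivAt (hC : 0 ≤ C) (hD : 0 ≤ D) (hE : 0 ≤ E) (ht : 0 ≤ t)
    (hc : ContinuousOn h (Icc 0 t)) (hd : ∀ s ∈ Ioo 0 t, HasDerivAt h (h' s) s)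
    (hle : ∀ s ∈ Ioo 0 t, E - C * h s - D ≤ h' s) :
    h 0 + E * t ≤ Real.exp (C * t) * (h t + D * t) := by
  have hdecr : E * t - Real.exp (C * t) * h t - D * Real.exp (C * t) * t
      ≤ E * 0 - Real.exp (C * 0) * h 0 - D * Real.exp (C * t) * 0 := by
    refine le_of_hasDerivAt_nonpos
      (h := fun s => E * s - Real.exp (C * s) * h s - D * Real.exp (C * t) * s) ht (by fun_prop)
      (fun s hs => ((hasDerivAt_id s).const_mul E).sub
        ((((hasDerivAt_id s).const_mul C).exp).mul (hd s hs)) |>.sub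
        ((hasDerivAt_id s).const_mul _)) fun s hs => ?_
    have hone : 1 ≤ Real.exp (C * s) := Real.one_le_exp (mul_nonneg hC hs.1.le)
    have hmono : Real.exp (C * s) ≤ Real.exp (C * t) := by gcongr; exact hs.2.le
    simp only [id]
    nlinarith [mul_le_mul_of_nonneg_left (hle s hs) (Real.exp_nonneg (C * s)),
      mul_le_mul_of_nonneg_left hmono hD, mul_le_mul_of_nonneg_left hone hE]
  simp only [mul_zero, Real.exp_zero, one_mul, sub_zero] at hdecr
  linarith

end Gronwall

/-! ### The cumulant semigroup -/

namespace IsCumulant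

variable {φ : ℝ → ℝ} {β σ : ℝ} {m : Measure ℝ} {v : ℝ → ℝ → ℝ} {l t : ℝ}

lemma zero_left (hv : IsCumulant φ v) (hl : 0 ≤ l) : v 0 l = l := by
  simpa using (hv l hl 0 le_rfl).2

lemma nonneg (hv : IsCumulant φ v) (hl : 0 ≤ l) (ht : 0 ≤ t) : 0 ≤ v t l := (hv l hl t ht).1

section Integrability

variable {T : ℝ}

lemma continuousOn_of_intervalIntegrable (hv : IsCumulant φ v) (hl : 0 ≤ l) (hT : 0 ≤ T)
    (hi : IntervalIntegrable (fun s => φ (v s l)) volume 0 T) :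
    ContinuousOn (fun s => v s l) (Icc 0 T) := by
  have hprim := intervalIntegral.continuousOn_primitive_interval' hi left_mem_uIcc
  rw [uIcc_of_le hT] at hprim
  exact (continuousOn_const.sub hprim).congr fun t ht => (hv l hl t ht.1).2

lemma continuousOn_comp_of_intervalIntegrable (hv : IsCumulant φ v)
    (hφ : IsBranchingMechanism φ β σ m) (hl : 0 ≤ l) (hT : 0 ≤ T)
    (hi : IntervalIntegrable (fun s => φ (v s l)) volume 0 T) :
    ContinuousOn (fun s => φ (v s l)) (Icc 0 T) :=
  hφ.continuousOn.comp (hv.continuousOn_of_intervalIntegrable hl hT hi)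
    fun _ hs => hv.nonneg hl hs.1

lemma hasDerivAt_of_intervalIntegrable (hv : IsCumulant φ v)
    (hφ : IsBranchingMechanism φ β σ m) (hl : 0 ≤ l) (hT : 0 ≤ T)
    (hi : IntervalIntegrable (fun s => φ (v s l)) volume 0 T) (ht : t ∈ Ioo 0 T) :
    HasDerivAt (fun s => v s l) (-φ (v t l)) t := by
  have hc : ContinuousOn (fun s => φ (v s l)) (Ioo 0 T) :=
    (hv.continuousOn_comp_of_intervalIntegrable hφ hl hT hi).mono Ioo_subset_Icc_self
  have hi' : IntervalIntegrable (fun s => φ (v s l)) volume 0 t :=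
    hi.mono_set (by rw [uIcc_of_le hT, uIcc_of_le ht.1.le]; exact Icc_subset_Icc_right ht.2.le)
  have hprim := intervalIntegral.integral_hasDerivAt_right hi'
    (hc.stronglyMeasurableAtFilter isOpen_Ioo t ht) (hc.continuousAt (isOpen_Ioo.mem_nhds ht))
  refine (hprim.const_sub l).congr_of_eventuallyEq ?_
  filter_upwards [isOpen_Ioo.mem_nhds ht] with s hs using (hv l hl s hs.1.le).2

lemma le_exp_mul_of_intervalIntegrable (hv : IsCumulant φ v) (hφ : IsBranchingMechanism φ β σ m)
    (hl : 0 ≤ l) (hT : 0 ≤ T) (hi : IntervalIntegrable (fun s => φ (v s l)) volume 0 T)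
    {A : ℝ} (hA : 0 ≤ A) (hAφ : ∀ u, 0 ≤ u → -(A * (1 + u)) ≤ φ u) :
    v T l ≤ Real.exp (A * T) * (l + A * T) := by
  have hgron := le_exp_mul_of_hasDerivAt_le hA hA hT
    (hv.continuousOn_of_intervalIntegrable hl hT hi)
    (fun s hs => hv.hasDerivAt_of_intervalIntegrable hφ hl hT hi hs)
    fun s hs => by linarith [hAφ (v s l) (hv.nonneg hl hs.1.le)]
  rwa [hv.zero_left hl] at hgron

lemma intervalIntegrable_of_forall_lt (hv : IsCumulant φ v) (hφ : IsBranchingMechanism φ β σ m)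
    (hl : 0 ≤ l) (hT : 0 ≤ T)
    (hi : ∀ t, 0 ≤ t → t < T → IntervalIntegrable (fun s => φ (v s l)) volume 0 t) :
    IntervalIntegrable (fun s => φ (v s l)) volume 0 T := by
  obtain ⟨A, hA, hAφ⟩ := hφ.exists_neg_le
  have hbound : ∀ t ∈ Ioo 0 T, v t l ≤ Real.exp (A * T) * (l + A * T) := by
    intro t ht
    refine (hv.le_exp_mul_of_intervalIntegrable hφ hl ht.1.le (hi t ht.1.le ht.2) hA hAφ).trans ?_
    have := ht.1.le
    gcongr <;> exact ht.2.le
  obtain ⟨M, hM⟩ := (isCompact_Icc (a := 0) (b := Real.exp (A * T) * (l + A * T))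
    ).exists_bound_of_continuousOn (hφ.continuousOn.mono fun u hu => hu.1)
  have hc : ContinuousOn (fun s => φ (v s l)) (Ioo 0 T) := by
    intro s hs
    obtain ⟨r, hsr, hrT⟩ := exists_between hs.2
    have hr : 0 ≤ r := hs.1.le.trans hsr.le
    exact ((hv.continuousOn_comp_of_intervalIntegrable hφ hl hr (hi r hr hrT)).continuousAt
      (Icc_mem_nhds hs.1 hsr)).continuousWithinAt
  rw [intervalIntegrable_iff_integrableOn_Ioo_of_le hT]
  refine Integrable.mono' (integrable_const M) (hc.aestronglyMeasurable measurableSet_Ioo) ?_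
  rw [ae_restrict_iff' measurableSet_Ioo]
  exact ae_of_all _ fun s hs => hM _ ⟨hv.nonneg hl hs.1.le, hbound s hs⟩

/-- The interval integral in `IsCumulant` is `0` where `s ↦ φ (v s l)` fails to be integrable, so
past the supremum `τ` of the times of integrability `v` would be constant, hence integrable. -/
lemma intervalIntegrable (hv : IsCumulant φ v) (hφ : IsBranchingMechanism φ β σ m)
    (hl : 0 ≤ l) (hT : 0 ≤ T) : IntervalIntegrable (fun s => φ (v s l)) volume 0 T := by
  by_contra hn
  let S := {t : ℝ | 0 ≤ t ∧ IntervalIntegrable (fun s => φ (v s l)) volume 0 t}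
  have hdown : ∀ t ∈ S, ∀ s, 0 ≤ s → s ≤ t → s ∈ S := fun t ht s hs hst =>
    ⟨hs, ht.2.mono_set (by rw [uIcc_of_le ht.1, uIcc_of_le hs]; exact Icc_subset_Icc_right hst)⟩
  have hzero : (0 : ℝ) ∈ S := ⟨le_rfl, by simp⟩
  have hle : ∀ t ∈ S, t ≤ T := fun t ht => le_of_not_ge fun h => hn (hdown t ht T hT h).2
  set τ := sSup S
  have hτ : 0 ≤ τ := le_csSup ⟨T, hle⟩ hzero
  have hτT : τ ≤ T := csSup_le ⟨0, hzero⟩ hle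
  have hbefore : IntervalIntegrable (fun s => φ (v s l)) volume 0 τ := by
    refine hv.intervalIntegrable_of_forall_lt hφ hl hτ fun t ht htτ => ?_
    obtain ⟨s, hs, hts⟩ := exists_lt_of_lt_csSup ⟨0, hzero⟩ htτ
    exact (hdown s hs t ht hts.le).2
  have hconst : ∀ t, τ < t → v t l = l := by
    intro t ht
    have hundef : ¬ IntervalIntegrable (fun s => φ (v s l)) volume 0 t := fun h =>
      (le_csSup ⟨T, hle⟩ ⟨hτ.trans ht.le, h⟩).not_gt ht
    rw [(hv l hl t (hτ.trans ht.le)).2, intervalIntegral.integral_undef hundef, sub_zero]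
  have hafter : IntervalIntegrable (fun s => φ (v s l)) volume τ T :=
    (intervalIntegrable_const (c := φ l)).congr fun s hs => by
      rw [uIoc_of_le hτT] at hs
      simp only [hconst s hs.1]
  exact hn (hbefore.trans hafter)

end Integrability

lemma continuousOn (hv : IsCumulant φ v) (hφ : IsBranchingMechanism φ β σ m) (hl : 0 ≤ l) :
    ContinuousOn (fun s => v s l) (Ici 0) := by
  intro s (hs : 0 ≤ s)
  have hs' : (0 : ℝ) ≤ s + 1 := by linarith
  refine (hv.continuousOn_of_intervalIntegrable hl hs' (hv.intervalIntegrable hφ hl hs') s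
    ⟨hs, by linarith⟩).mono_of_mem_nhdsWithin ?_
  rw [← Ici_inter_Iic]
  exact inter_mem self_mem_nhdsWithin (mem_nhdsWithin_of_mem_nhds (Iic_mem_nhds (by linarith)))

lemma hasDerivAt (hv : IsCumulant φ v) (hφ : IsBranchingMechanism φ β σ m) (hl : 0 ≤ l)
    (ht : 0 < t) : HasDerivAt (fun s => v s l) (-φ (v t l)) t :=
  hv.hasDerivAt_of_intervalIntegrable hφ hl (by linarith : (0 : ℝ) ≤ t + 1)
    (hv.intervalIntegrable hφ hl (by linarith)) ⟨ht, by linarith⟩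

lemma hasDerivWithinAt (hv : IsCumulant φ v) (hφ : IsBranchingMechanism φ β σ m) (hl : 0 ≤ l)
    (ht : 0 ≤ t) : HasDerivWithinAt (fun s => v s l) (-φ (v t l)) (Ici t) t := by
  have hc : ContinuousWithinAt (fun s => -φ (v s l)) (Ici 0) t :=
    (hφ.continuousOn.comp (hv.continuousOn hφ hl) fun s hs => hv.nonneg hl hs).neg t ht
  refine hasDerivWithinAt_Ici_of_tendsto_deriv (s := Ioi t) (fun s hs => ?_)
    ((hv.continuousOn hφ hl t ht).mono (Ioi_subset_Ici ht)) self_mem_nhdsWithin ?_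
  · exact (hv.hasDerivAt hφ hl (ht.trans_lt hs)).differentiableAt.differentiableWithinAt
  · refine (hc.mono (Ioi_subset_Ici ht)).tendsto.congr' ?_
    filter_upwards [self_mem_nhdsWithin] with s hs
    exact (hv.hasDerivAt hφ hl (ht.trans_lt hs)).deriv.symm

lemma exists_le (hv : IsCumulant φ v) (hφ : IsBranchingMechanism φ β σ m) (R T : ℝ) :
    ∃ B, ∀ l ∈ Icc 0 R, ∀ t ∈ Icc 0 T, v t l ≤ B := by
  obtain ⟨A, hA, hAφ⟩ := hφ.exists_neg_le
  refine ⟨Real.exp (A * T) * (R + A * T), fun l hl t ht => ?_⟩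
  refine (hv.le_exp_mul_of_intervalIntegrable hφ hl.1 ht.1 (hv.intervalIntegrable hφ hl.1 ht.1)
    hA hAφ).trans ?_
  have := hl.1
  have := ht.1
  gcongr
  exacts [ht.2, hl.2, ht.2]

lemma exists_mul_le (hv : IsCumulant φ v) (hφ : IsBranchingMechanism φ β σ m) (R T : ℝ) :
    ∃ c, 0 < c ∧ ∀ l ∈ Icc 0 R, ∀ t ∈ Icc 0 T, c * l ≤ v t l := by
  obtain ⟨B, hB⟩ := hv.exists_le hφ R T
  obtain ⟨C, hC, hCφ⟩ := hφ.exists_le_mul B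
  refine ⟨Real.exp (-(C * T)), Real.exp_pos _, fun l hl t ht => ?_⟩
  have hgron := add_mul_le_exp_mul_of_le_hasDerivAt hC le_rfl le_rfl ht.1
    ((hv.continuousOn hφ hl.1).mono Icc_subset_Ici_self)
    (fun s hs => hv.hasDerivAt hφ hl.1 hs.1) fun s hs => by
      linarith [hCφ (v s l) ⟨hv.nonneg hl.1 hs.1.le, hB l hl s ⟨hs.1.le, hs.2.le.trans ht.2⟩⟩]
  simp only [hv.zero_left hl.1, zero_mul, add_zero] at hgron
  rw [Real.exp_neg, inv_mul_le_iff₀ (Real.exp_pos _)]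
  refine hgron.trans ?_
  have := hv.nonneg hl.1 ht.1
  gcongr
  exact ht.2

lemma pos (hv : IsCumulant φ v) (hφ : IsBranchingMechanism φ β σ m) (hl : 0 < l) (ht : 0 ≤ t) :
    0 < v t l := by
  obtain ⟨c, hc, hle⟩ := hv.exists_mul_le hφ l t
  exact (mul_pos hc hl).trans_le (hle l ⟨hl.le, le_rfl⟩ t ⟨ht, le_rfl⟩)

lemma exists_forall_mem_Icc (hv : IsCumulant φ v) (hφ : IsBranchingMechanism φ β σ m)
    (hl : 0 < l) (T : ℝ) : ∃ a b, 0 < a ∧ ∀ t ∈ Icc 0 T, v t l ∈ Icc a b := by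
  obtain ⟨b, hb⟩ := hv.exists_le hφ l T
  obtain ⟨c, hc, hle⟩ := hv.exists_mul_le hφ l T
  exact ⟨c * l, b, mul_pos hc hl,
    fun t ht => ⟨hle l ⟨hl.le, le_rfl⟩ t ht, hb l ⟨hl.le, le_rfl⟩ t ht⟩⟩

lemma le_exp_mul (hv : IsCumulant φ v) (hφ : IsBranchingMechanism φ β σ m) {A : ℝ} (hA : 0 ≤ A)
    (hAφ : ∀ u, 0 ≤ u → -(A * u) ≤ φ u) (hl : 0 ≤ l) (ht : 0 ≤ t) :
    v t l ≤ Real.exp (A * t) * l := by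
  have hgron := le_exp_mul_of_hasDerivAt_le hA le_rfl ht
    ((hv.continuousOn hφ hl).mono Icc_subset_Ici_self)
    (fun s hs => hv.hasDerivAt hφ hl hs.1) fun s hs => by
      linarith [hAφ (v s l) (hv.nonneg hl hs.1.le)]
  simpa [hv.zero_left hl] using hgron

lemma flow (hv : IsCumulant φ v) (hφ : IsBranchingMechanism φ β σ m) {s : ℝ} (hl : 0 < l)
    (hs : 0 ≤ s) (ht : 0 ≤ t) : v (t + s) l = v t (v s l) := by
  have hl' := hv.pos hφ hl hs
  obtain ⟨a₁, b₁, ha₁, hmem₁⟩ := hv.exists_forall_mem_Icc hφ hl (t + s)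
  obtain ⟨a₂, b₂, ha₂, hmem₂⟩ := hv.exists_forall_mem_Icc hφ hl' t
  obtain ⟨L, hL⟩ := hφ.exists_lipschitzOnWith (b := max b₁ b₂) (lt_min ha₁ ha₂)
  have hshift : ∀ r ∈ Ico 0 t,
      HasDerivWithinAt (fun r => v (r + s) l) (-φ (v (r + s) l)) (Ici r) r := by
    intro r hr
    have := (hv.hasDerivWithinAt hφ hl.le (add_nonneg hr.1 hs)).scomp r
      ((hasDerivAt_id r).add_const s).hasDerivWithinAt fun u (hu : r ≤ u) => by simpa using hu
    rwa [one_smul] at this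
  refine ODE_solution_unique_of_mem_Icc_right (v := fun _ u => -φ u)
    (s := fun _ => Icc (min a₁ a₂) (max b₁ b₂)) (fun _ _ => hL.neg)
    ((hv.continuousOn hφ hl.le).comp (by fun_prop) fun r hr => add_nonneg hr.1 hs) hshift
    (fun r hr => ?_) ((hv.continuousOn hφ hl'.le).mono Icc_subset_Ici_self)
    (fun r hr => hv.hasDerivWithinAt hφ hl'.le hr.1) (fun r hr => ?_) ?_ ⟨ht, le_rfl⟩
  · exact Icc_subset_Icc (min_le_left _ _) (le_max_left _ _)
      (hmem₁ (r + s) ⟨add_nonneg hr.1 hs, by linarith [hr.2]⟩)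
  · exact Icc_subset_Icc (min_le_right _ _) (le_max_right _ _) (hmem₂ r ⟨hr.1, hr.2.le⟩)
  · simp [hv.zero_left hl'.le]

end IsCumulant

/-! ### Laplace transforms and the forward equation -/

lemma ae_nonneg_of_measure_Iio_eq_zero {ν : Measure ℝ} (h : ν (Iio 0) = 0) : ∀ᵐ y ∂ν, 0 ≤ y := by
  simpa [ae_iff, Iio_def] using h

lemma mul_exp_neg_le (u : ℝ) : u * Real.exp (-u) ≤ 1 - Real.exp (-u) := by
  have hinv : Real.exp (-u) * Real.exp u = 1 := by simp [← Real.exp_add]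
  nlinarith [Real.add_one_le_exp u, Real.exp_pos (-u)]

lemma exp_neg_sub_exp_neg_two_mul_le (u : ℝ) :
    Real.exp (-u) - Real.exp (-(2 * u)) ≤ u * Real.exp (-u) := by
  have hsq : Real.exp (-(2 * u)) = Real.exp (-u) * Real.exp (-u) := by
    rw [← Real.exp_add]
    ring_nf
  rw [hsq]
  nlinarith [Real.add_one_le_exp (-u), Real.exp_pos (-u)]

section Laplace

variable {ν : Measure ℝ} [IsFiniteMeasure ν] {l : ℝ}

lemma integrable_exp_neg_mul (h : ∀ᵐ y ∂ν, 0 ≤ y) (hl : 0 ≤ l) :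
    Integrable (fun y => Real.exp (-(l * y))) ν := by
  refine (integrable_const (1 : ℝ)).mono' (by fun_prop) ?_
  filter_upwards [h] with y hy
  rw [Real.norm_eq_abs, Real.abs_exp, Real.exp_le_one_iff]
  exact neg_nonpos.2 (mul_nonneg hl hy)

lemma integrable_mul_exp_neg_mul (h : ∀ᵐ y ∂ν, 0 ≤ y) (hl : 0 < l) :
    Integrable (fun y => y * Real.exp (-(l * y))) ν := by
  refine (integrable_const l⁻¹).mono' (by fun_prop) ?_
  filter_upwards [h] with y hy
  rw [Real.norm_eq_abs, abs_of_nonneg (by positivity), ← one_div, le_div_iff₀ hl]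
  nlinarith [mul_exp_neg_le (l * y), Real.exp_pos (-(l * y))]

lemma hasDerivAt_integral_exp_neg_mul (h : ∀ᵐ y ∂ν, 0 ≤ y) (hl : 0 < l) :
    HasDerivAt (fun l => ∫ y, Real.exp (-(l * y)) ∂ν) (-∫ y, y * Real.exp (-(l * y)) ∂ν) l := by
  have hmem : l ∈ interior (ProbabilityTheory.integrableExpSet (fun y : ℝ => -y) ν) := by
    rw [mem_interior_iff_mem_nhds]
    filter_upwards [Ioi_mem_nhds hl] with a (ha : 0 < a)
    simpa [ProbabilityTheory.integrableExpSet] using integrable_exp_neg_mul h ha.le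
  have hmgf := ProbabilityTheory.hasDerivAt_mgf hmem
  unfold ProbabilityTheory.mgf at hmgf
  simpa only [mul_neg, neg_mul, integral_neg] using hmgf

end Laplace

namespace IsCBSemigroup

variable {φ : ℝ → ℝ} {β σ : ℝ} {m : Measure ℝ} {v : ℝ → ℝ → ℝ} {Q : ℝ → ℝ → Measure ℝ}
  {t x l : ℝ}

lemma isProbabilityMeasure (hQ : IsCBSemigroup v Q) (ht : 0 ≤ t) (hx : 0 ≤ x) :
    IsProbabilityMeasure (Q t x) := (hQ t x ht hx).1

lemma ae_nonneg (hQ : IsCBSemigroup v Q) (ht : 0 ≤ t) (hx : 0 ≤ x) : ∀ᵐ y ∂Q t x, 0 ≤ y :=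
  ae_nonneg_of_measure_Iio_eq_zero (hQ t x ht hx).2.1

lemma integral_exp (hQ : IsCBSemigroup v Q) (ht : 0 ≤ t) (hx : 0 ≤ x) (hl : 0 ≤ l) :
    ∫ y, Real.exp (-(l * y)) ∂Q t x = Real.exp (-(x * v t l)) := (hQ t x ht hx).2.2 l hl

lemma cumulant_zero (hQ : IsCBSemigroup v Q) (ht : 0 ≤ t) : v t 0 = 0 := by
  have := hQ.isProbabilityMeasure ht zero_le_one
  have h := hQ.integral_exp ht zero_le_one le_rfl
  simp only [zero_mul, neg_zero, Real.exp_zero, integral_const, probReal_univ, one_smul,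
    one_mul] at h
  exact neg_eq_zero.1 ((Real.exp_eq_one_iff _).1 h.symm)

lemma differentiableAt_cumulant (hQ : IsCBSemigroup v Q) (ht : 0 ≤ t) (hl : 0 < l) :
    DifferentiableAt ℝ (v t) l := by
  have := hQ.isProbabilityMeasure ht zero_le_one
  have hlog : v t =ᶠ[nhds l] fun l => -Real.log (∫ y, Real.exp (-(l * y)) ∂Q t 1) := by
    filter_upwards [Ioi_mem_nhds hl] with a (ha : 0 < a)
    rw [hQ.integral_exp ht zero_le_one ha.le, Real.log_exp, one_mul, neg_neg]
  refine ((hasDerivAt_integral_exp_neg_mul (hQ.ae_nonneg ht zero_le_one) hl).differentiableAt.log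
    ?_).neg.congr_of_eventuallyEq hlog
  rw [hQ.integral_exp ht zero_le_one hl.le]
  exact (Real.exp_pos _).ne'

lemma hasDerivWithinAt_cumulant_flow (hQ : IsCBSemigroup v Q) (hφ : IsBranchingMechanism φ β σ m)
    (hv : IsCumulant φ v) (ht : 0 ≤ t) (hl : 0 < l) :
    HasDerivWithinAt (fun s => v t (v s l)) (-(φ l * deriv (v t) l)) (Ici 0) 0 := by
  have hleft := hv.hasDerivWithinAt hφ hl.le le_rfl
  rw [hv.zero_left hl.le] at hleft
  have hright : HasDerivAt (v t) (deriv (v t) l) (v 0 l) := by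
    rw [hv.zero_left hl.le]
    exact (hQ.differentiableAt_cumulant ht hl).hasDerivAt
  exact (hright.comp_hasDerivWithinAt (0 : ℝ) hleft).congr_deriv (by ring)

/-- Differentiate `v (t + s) l = v t (v s l)` at `s = 0` on both sides. -/
lemma mul_deriv_cumulant (hQ : IsCBSemigroup v Q) (hφ : IsBranchingMechanism φ β σ m)
    (hv : IsCumulant φ v) (ht : 0 ≤ t) (hl : 0 < l) : φ l * deriv (v t) l = φ (v t l) := by
  have htime : HasDerivWithinAt (fun s => v (t + s) l) (-φ (v t l)) (Ici 0) 0 := by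
    have := HasDerivWithinAt.scomp_of_eq (0 : ℝ) (hv.hasDerivWithinAt hφ hl.le ht)
      ((hasDerivAt_id (0 : ℝ)).const_add t).hasDerivWithinAt
      (fun u (hu : 0 ≤ u) => by simpa using hu) (by simp)
    rwa [one_smul] at this
  have hflow := htime.congr (fun s hs => (hv.flow hφ hl hs ht).symm) (hv.flow hφ hl le_rfl ht).symm
  exact neg_injective ((uniqueDiffOn_Ici (0 : ℝ) 0 self_mem_Ici).eq_deriv _
    (hQ.hasDerivWithinAt_cumulant_flow hφ hv ht hl) hflow)

lemma integral_mul_exp (hQ : IsCBSemigroup v Q) (ht : 0 ≤ t) (hx : 0 ≤ x) (hl : 0 < l) :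
    ∫ y, y * Real.exp (-(l * y)) ∂Q t x = x * deriv (v t) l * Real.exp (-(x * v t l)) := by
  have := hQ.isProbabilityMeasure ht hx
  have hcum : HasDerivAt (fun l => ∫ y, Real.exp (-(l * y)) ∂Q t x)
      (Real.exp (-(x * v t l)) * -(x * deriv (v t) l)) l := by
    refine (((hQ.differentiableAt_cumulant ht hl).hasDerivAt).const_mul x).neg.exp
      |>.congr_of_eventuallyEq ?_
    filter_upwards [Ioi_mem_nhds hl] with a (ha : 0 < a) using hQ.integral_exp ht hx ha.le
  linarith [(hasDerivAt_integral_exp_neg_mul (hQ.ae_nonneg ht hx) hl).unique hcum]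

lemma hasDerivAt_integral_exp (hQ : IsCBSemigroup v Q) (hφ : IsBranchingMechanism φ β σ m)
    (hv : IsCumulant φ v) (ht : 0 < t) (hx : 0 ≤ x) (hl : 0 ≤ l) :
    HasDerivAt (fun s => ∫ y, Real.exp (-(l * y)) ∂Q s x)
      (φ l * ∫ y, y * Real.exp (-(l * y)) ∂Q t x) t := by
  have hcum : (fun s => ∫ y, Real.exp (-(l * y)) ∂Q s x) =ᶠ[nhds t]
      fun s => Real.exp (-(x * v s l)) := by
    filter_upwards [Ioi_mem_nhds ht] with s (hs : 0 < s) using hQ.integral_exp hs.le hx hl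
  refine HasDerivAt.congr_of_eventuallyEq ?_ hcum
  refine ((hv.hasDerivAt hφ hl ht).const_mul x).neg.exp.congr_deriv ?_
  rcases hl.eq_or_lt with rfl | hl
  · simp [hφ.map_zero, hQ.cumulant_zero ht.le]
  · rw [hQ.integral_mul_exp ht.le hx hl, ← hQ.mul_deriv_cumulant hφ hv ht.le hl, Pi.neg_apply]
    ring

lemma continuousOn_integral_exp (hQ : IsCBSemigroup v Q) (hφ : IsBranchingMechanism φ β σ m)
    (hv : IsCumulant φ v) (hx : 0 ≤ x) (hl : 0 ≤ l) :
    ContinuousOn (fun s => ∫ y, Real.exp (-(l * y)) ∂Q s x) (Ici 0) := by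
  have hc := hv.continuousOn hφ hl
  exact (by fun_prop : ContinuousOn (fun s => Real.exp (-(x * v s l))) (Ici 0)).congr
    fun s hs => hQ.integral_exp hs hx hl

lemma integral_mul_exp_le (hQ : IsCBSemigroup v Q) (hφ : IsBranchingMechanism φ β σ m)
    (hv : IsCumulant φ v) {A : ℝ} (hA : 0 ≤ A) (hAφ : ∀ u, 0 ≤ u → -(A * u) ≤ φ u)
    (ht : 0 ≤ t) (hx : 0 ≤ x) (hl : 0 < l) :
    ∫ y, y * Real.exp (-(l * y)) ∂Q t x ≤ x * Real.exp (A * t) := by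
  have := hQ.isProbabilityMeasure ht hx
  have hexp := integrable_exp_neg_mul (hQ.ae_nonneg ht hx) hl.le
  refine le_of_mul_le_mul_left ?_ hl
  calc l * ∫ y, y * Real.exp (-(l * y)) ∂Q t x
      = ∫ y, l * (y * Real.exp (-(l * y))) ∂Q t x := (integral_const_mul _ _).symm
    _ ≤ ∫ y, (1 - Real.exp (-(l * y))) ∂Q t x := by
      refine integral_mono ((integrable_mul_exp_neg_mul (hQ.ae_nonneg ht hx) hl).const_mul l)
        ((integrable_const 1).sub hexp) fun y => ?_
      simpa only [← mul_assoc] using mul_exp_neg_le (l * y)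
    _ = 1 - Real.exp (-(x * v t l)) := by
      rw [integral_sub (integrable_const 1) hexp, hQ.integral_exp ht hx hl.le]
      simp
    _ ≤ x * v t l := by linarith [Real.add_one_le_exp (-(x * v t l))]
    _ ≤ x * (Real.exp (A * t) * l) := by gcongr; exact hv.le_exp_mul hφ hA hAφ hl.le ht
    _ = l * (x * Real.exp (A * t)) := by ring

lemma measure_Ioi_pos (hQ : IsCBSemigroup v Q) (hφ : IsBranchingMechanism φ β σ m)
    (hv : IsCumulant φ v) (ht : 0 ≤ t) (hx : 0 < x) : 0 < Q t x (Ioi 0) := by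
  have := hQ.isProbabilityMeasure ht hx.le
  refine pos_iff_ne_zero.2 fun hzero => ?_
  have hae : ∀ᵐ y ∂Q t x, Real.exp (-(1 * y)) = 1 := by
    have hnonpos : ∀ᵐ y ∂Q t x, ¬ 0 < y := measure_eq_zero_iff_ae_notMem.1 hzero
    filter_upwards [hnonpos, hQ.ae_nonneg ht hx.le] with y hy hy'
    simp [le_antisymm (not_lt.1 hy) hy']
  have hone : Real.exp (-(x * v t 1)) = 1 := by
    rw [← hQ.integral_exp ht hx.le zero_le_one, integral_congr_ae hae]
    simp
  rw [Real.exp_eq_one_iff] at hone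
  nlinarith [hv.pos hφ one_pos ht]

lemma integral_exp_two_mul_lt (hQ : IsCBSemigroup v Q) (hφ : IsBranchingMechanism φ β σ m)
    (hv : IsCumulant φ v) (ht : 0 ≤ t) (hx : 0 < x) (hl : 0 < l) :
    ∫ y, Real.exp (-(2 * l * y)) ∂Q t x < ∫ y, Real.exp (-(l * y)) ∂Q t x := by
  have := hQ.isProbabilityMeasure ht hx.le
  have hae := hQ.ae_nonneg ht hx.le
  have hi := integrable_exp_neg_mul hae hl.le
  have hi₂ := integrable_exp_neg_mul hae (by positivity : 0 ≤ 2 * l)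
  rw [← sub_pos, ← integral_sub hi hi₂,
    integral_pos_iff_support_of_nonneg_ae (f := fun y => _ - _) ?_ (hi.sub hi₂)]
  · refine (hQ.measure_Ioi_pos hφ hv ht hx).trans_le (measure_mono fun y (hy : 0 < y) => ?_)
    have : 0 < l * y := by positivity
    exact (sub_pos.2 (Real.exp_lt_exp.2 (by linarith))).ne'
  · filter_upwards [hae] with y hy
    have : 0 ≤ l * y := by positivity
    exact sub_nonneg.2 (Real.exp_le_exp.2 (by linarith))

lemma integral_exp_sub_integral_exp_two_mul_le (hQ : IsCBSemigroup v Q) (ht : 0 ≤ t) (hx : 0 ≤ x)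
    (hl : 0 < l) :
    ∫ y, Real.exp (-(l * y)) ∂Q t x - ∫ y, Real.exp (-(2 * l * y)) ∂Q t x
      ≤ l * ∫ y, y * Real.exp (-(l * y)) ∂Q t x := by
  have := hQ.isProbabilityMeasure ht hx
  have hae := hQ.ae_nonneg ht hx
  have hi := integrable_exp_neg_mul hae hl.le
  have hi₂ := integrable_exp_neg_mul hae (by positivity : 0 ≤ 2 * l)
  rw [← integral_sub hi hi₂, ← integral_const_mul]
  refine integral_mono (hi.sub hi₂) ((integrable_mul_exp_neg_mul hae hl).const_mul l) fun y => ?_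
  simpa only [mul_assoc] using exp_neg_sub_exp_neg_two_mul_le (l * y)

lemma exists_le_integral_mul_exp (hQ : IsCBSemigroup v Q) (hφ : IsBranchingMechanism φ β σ m)
    (hv : IsCumulant φ v) {T : ℝ} (hT : 0 ≤ T) (hx : 0 < x) (hl : 0 < l) :
    ∃ c, 0 < c ∧ ∀ t ∈ Icc 0 T, c ≤ ∫ y, y * Real.exp (-(l * y)) ∂Q t x := by
  have hc : ContinuousOn (fun s => ∫ y, Real.exp (-(l * y)) ∂Q s x -
      ∫ y, Real.exp (-(2 * l * y)) ∂Q s x) (Icc 0 T) :=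
    ((hQ.continuousOn_integral_exp hφ hv hx.le hl.le).sub
      (hQ.continuousOn_integral_exp hφ hv hx.le (by positivity))).mono Icc_subset_Ici_self
  obtain ⟨s, hs, hmin⟩ := isCompact_Icc.exists_isMinOn ⟨0, le_rfl, hT⟩ hc
  refine ⟨_, div_pos (sub_pos.2 (hQ.integral_exp_two_mul_lt hφ hv hs.1 hx hl)) hl, fun t ht => ?_⟩
  rw [div_le_iff₀' hl]
  exact (hmin ht).trans (hQ.integral_exp_sub_integral_exp_two_mul_le ht.1 hx.le hl)

end IsCBSemigroup

/-! ### The generator on exponential sums -/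

/-- The integrand `g(y + z) - g(y) - z g'(y) 1_{z ≤ 1}` of the jump part of the generator. -/
def jumpIncr (g : ℝ → ℝ) (y z : ℝ) : ℝ := g (y + z) - g y - if z ≤ 1 then z * deriv g y else 0

/-- The generator `g ↦ y (-β g'(y) + σ² g''(y) / 2 + ∫ jumpIncr g y z m(dz))` of the CB-process
whose branching mechanism has parameters `β`, `σ` and `m`. -/
def cbGenerator (β σ : ℝ) (m : Measure ℝ) (g : ℝ → ℝ) (y : ℝ) : ℝ :=
  y * (-β * deriv g y + σ ^ 2 / 2 * deriv (deriv g) y + ∫ z, jumpIncr g y z ∂m)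

/-- The exponential sum `y ↦ ∑ cᵢ e^{-aᵢ y}`, whose expectation under the CB-process is explicit in
terms of the cumulant. -/
def expSum {ι : Type*} (s : Finset ι) (c a : ι → ℝ) (y : ℝ) : ℝ :=
  ∑ i ∈ s, c i * Real.exp (-(a i * y))

section ExpSum

variable {ι : Type*} {s : Finset ι} {c a : ι → ℝ}

lemma hasDerivAt_expSum (y : ℝ) :
    HasDerivAt (expSum s c a) (expSum s (fun i => -(c i * a i)) a y) y := by
  refine HasDerivAt.fun_sum fun i _ => ?_
  exact (((hasDerivAt_id y).const_mul (a i)).neg.exp.const_mul (c i)).congr_deriv (by simp; ring)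

lemma deriv_expSum : deriv (expSum s c a) = expSum s (fun i => -(c i * a i)) a :=
  funext fun y => (hasDerivAt_expSum y).deriv

lemma jumpIncr_expSum (y z : ℝ) :
    jumpIncr (expSum s c a) y z =
      ∑ i ∈ s, c i * Real.exp (-(a i * y)) * levyKernel z (a i) := by
  have hexp : ∀ i, Real.exp (-(a i * (y + z))) = Real.exp (-(a i * y)) * Real.exp (-(z * a i)) :=
    fun i => by rw [← Real.exp_add]; ring_nf
  rw [jumpIncr, deriv_expSum]
  unfold levyKernel
  split_ifs <;> simp only [expSum, Finset.mul_sum, ← Finset.sum_sub_distrib, hexp, sub_zero] <;>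
    exact Finset.sum_congr rfl fun i _ => by ring

variable {φ : ℝ → ℝ} {β σ : ℝ} {m : Measure ℝ}

lemma integrable_jumpIncr_expSum (hφ : IsBranchingMechanism φ β σ m) (ha : ∀ i ∈ s, 0 ≤ a i)
    (y : ℝ) : Integrable (jumpIncr (expSum s c a) y) m := by
  rw [funext (jumpIncr_expSum y)]
  exact integrable_finsetSum _ fun i hi => (hφ.integrable_levyKernel (ha i hi)).const_mul _

lemma cbGenerator_expSum (hφ : IsBranchingMechanism φ β σ m) (ha : ∀ i ∈ s, 0 ≤ a i) (y : ℝ) :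
    cbGenerator β σ m (expSum s c a) y =
      ∑ i ∈ s, c i * (φ (a i) * (y * Real.exp (-(a i * y)))) := by
  have hjump : ∫ z, jumpIncr (expSum s c a) y z ∂m =
      ∑ i ∈ s, c i * Real.exp (-(a i * y)) * ∫ z, levyKernel z (a i) ∂m := by
    simp_rw [jumpIncr_expSum]
    rw [integral_finsetSum _ fun i hi => (hφ.integrable_levyKernel (ha i hi)).const_mul _]
    simp_rw [integral_const_mul]
  rw [cbGenerator, hjump, deriv_expSum, deriv_expSum]
  simp only [expSum, Finset.mul_sum, ← Finset.sum_add_distrib]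
  refine Finset.sum_congr rfl fun i hi => ?_
  rw [hφ.eq_integral_levyKernel (ha i hi)]
  ring

namespace IsCBSemigroup

variable {v : ℝ → ℝ → ℝ} {Q : ℝ → ℝ → Measure ℝ} {t x : ℝ}

lemma integral_expSum (hQ : IsCBSemigroup v Q) (ha : ∀ i ∈ s, 0 ≤ a i) (ht : 0 ≤ t) (hx : 0 ≤ x) :
    ∫ y, expSum s c a y ∂Q t x = ∑ i ∈ s, c i * ∫ y, Real.exp (-(a i * y)) ∂Q t x := by
  have := hQ.isProbabilityMeasure ht hx
  unfold expSum
  rw [integral_finsetSum _ fun i hi =>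
    (integrable_exp_neg_mul (hQ.ae_nonneg ht hx) (ha i hi)).const_mul _]
  simp_rw [integral_const_mul]

lemma integral_expSum_zero (hQ : IsCBSemigroup v Q) (hv : IsCumulant φ v) (ha : ∀ i ∈ s, 0 ≤ a i)
    (hx : 0 ≤ x) : ∫ y, expSum s c a y ∂Q 0 x = expSum s c a x := by
  rw [hQ.integral_expSum ha le_rfl hx]
  refine Finset.sum_congr rfl fun i hi => ?_
  rw [hQ.integral_exp le_rfl hx (ha i hi), hv.zero_left (ha i hi), mul_comm x]

lemma continuousOn_integral_expSum (hQ : IsCBSemigroup v Q) (hφ : IsBranchingMechanism φ β σ m)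
    (hv : IsCumulant φ v) (ha : ∀ i ∈ s, 0 ≤ a i) (hx : 0 ≤ x) :
    ContinuousOn (fun t => ∫ y, expSum s c a y ∂Q t x) (Ici 0) := by
  refine ContinuousOn.congr ?_ fun t ht => hQ.integral_expSum ha ht hx
  exact continuousOn_finsetSum _ fun i hi =>
    continuousOn_const.mul (hQ.continuousOn_integral_exp hφ hv hx (ha i hi))

lemma integrable_mechanism_mul (hQ : IsCBSemigroup v Q) (hφ : IsBranchingMechanism φ β σ m)
    (ht : 0 ≤ t) (hx : 0 ≤ x) {l : ℝ} (hl : 0 ≤ l) :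
    Integrable (fun y => φ l * (y * Real.exp (-(l * y)))) (Q t x) := by
  have := hQ.isProbabilityMeasure ht hx
  rcases hl.eq_or_lt with rfl | hl
  · simp [hφ.map_zero]
  · exact (integrable_mul_exp_neg_mul (hQ.ae_nonneg ht hx) hl).const_mul _

lemma integrable_cbGenerator_expSum (hQ : IsCBSemigroup v Q) (hφ : IsBranchingMechanism φ β σ m)
    (ha : ∀ i ∈ s, 0 ≤ a i) (ht : 0 ≤ t) (hx : 0 ≤ x) :
    Integrable (cbGenerator β σ m (expSum s c a)) (Q t x) := by
  rw [funext (cbGenerator_expSum hφ ha)]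
  exact integrable_finsetSum _ fun i hi =>
    (hQ.integrable_mechanism_mul hφ ht hx (ha i hi)).const_mul _

lemma hasDerivAt_integral_expSum (hQ : IsCBSemigroup v Q) (hφ : IsBranchingMechanism φ β σ m)
    (hv : IsCumulant φ v) (ha : ∀ i ∈ s, 0 ≤ a i) (ht : 0 < t) (hx : 0 ≤ x) :
    HasDerivAt (fun t => ∫ y, expSum s c a y ∂Q t x)
      (∫ y, cbGenerator β σ m (expSum s c a) y ∂Q t x) t := by
  have hsum := HasDerivAt.fun_sum fun i hi =>
    (hQ.hasDerivAt_integral_exp hφ hv ht hx (ha i hi)).const_mul (c i)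
  refine (hsum.congr_of_eventuallyEq ?_).congr_deriv ?_
  · filter_upwards [Ioi_mem_nhds ht] with t ht using hQ.integral_expSum ha (le_of_lt ht) hx
  · simp_rw [cbGenerator_expSum hφ ha]
    rw [integral_finsetSum _ fun i hi =>
      (hQ.integrable_mechanism_mul hφ ht.le hx (ha i hi)).const_mul _]
    simp_rw [integral_const_mul]

end IsCBSemigroup

end ExpSum

/-! ### The test functions -/

/-- `sat l y = 1 - e^{-ly}`. Its powers `sat l ^ n` serve as bounded test functions which are
comparable to `y ↦ min 1 ((l y) ^ n)`. -/
def sat (l y : ℝ) : ℝ := 1 - Real.exp (-(l * y))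

section Sat

variable {l y z : ℝ}

lemma measurable_sat_pow (n : ℕ) (l : ℝ) : Measurable fun y => sat l y ^ n := by
  unfold sat
  fun_prop

lemma sat_nonneg (hl : 0 ≤ l) (hy : 0 ≤ y) : 0 ≤ sat l y :=
  sub_nonneg.2 (Real.exp_le_one_iff.2 (neg_nonpos.2 (mul_nonneg hl hy)))

lemma sat_le_one (l y : ℝ) : sat l y ≤ 1 := sub_le_self _ (Real.exp_pos _).le

lemma sat_le_mul (l y : ℝ) : sat l y ≤ l * y := by
  unfold sat
  linarith [Real.add_one_le_exp (-(l * y))]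

lemma mul_exp_neg_le_sat (l y : ℝ) : l * y * Real.exp (-(l * y)) ≤ sat l y :=
  mul_exp_neg_le (l * y)

lemma sat_pow_nonneg (hl : 0 ≤ l) (hy : 0 ≤ y) (n : ℕ) : 0 ≤ sat l y ^ n :=
  pow_nonneg (sat_nonneg hl hy) n

lemma integrable_sat_pow {ν : Measure ℝ} [IsFiniteMeasure ν] (hν : ∀ᵐ y ∂ν, 0 ≤ y) (hl : 0 ≤ l)
    (n : ℕ) : Integrable (fun y => sat l y ^ n) ν := by
  refine (integrable_const (1 : ℝ)).mono' (measurable_sat_pow n l).aestronglyMeasurable ?_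
  filter_upwards [hν] with y hy
  rw [Real.norm_eq_abs, abs_of_nonneg (sat_pow_nonneg hl hy n)]
  exact pow_le_one₀ (sat_nonneg hl hy) (sat_le_one l y)

lemma sat_add (l y z : ℝ) : sat l (y + z) = sat l y + sat l z * Real.exp (-(l * y)) := by
  have hexp : Real.exp (-(l * (y + z))) = Real.exp (-(l * z)) * Real.exp (-(l * y)) := by
    rw [← Real.exp_add]
    ring_nf
  unfold sat
  linear_combination -hexp

lemma sat_pow_eq_expSum (n : ℕ) (l : ℝ) :
    sat l ^ n = expSum (Finset.range (n + 1)) (fun j => (-1) ^ j * (n.choose j : ℝ))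
      (fun j => j * l) := by
  funext y
  rw [Pi.pow_apply, sat, sub_eq_neg_add, add_pow]
  refine Finset.sum_congr rfl fun j _ => ?_
  rw [one_pow, mul_one, neg_pow, ← Real.exp_nat_mul, mul_neg, mul_assoc (j : ℝ)]
  ring

lemma hasDerivAt_sat (l y : ℝ) : HasDerivAt (sat l) (l * Real.exp (-(l * y))) y :=
  (((hasDerivAt_id y).const_mul l).neg.exp.const_sub 1).congr_deriv (by simp; ring)

lemma hasDerivAt_sat_pow (n : ℕ) (l y : ℝ) :
    HasDerivAt (sat l ^ (n + 1)) ((n + 1) * sat l y ^ n * (l * Real.exp (-(l * y)))) y := by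
  simpa using (hasDerivAt_sat l y).pow (n + 1)

lemma deriv_sat_pow (n : ℕ) (l : ℝ) :
    deriv (sat l ^ (n + 1)) = fun y => (n + 1) * sat l y ^ n * (l * Real.exp (-(l * y))) :=
  funext fun y => (hasDerivAt_sat_pow n l y).deriv

lemma hasDerivAt_deriv_sat_pow (n : ℕ) (l y : ℝ) :
    HasDerivAt (deriv (sat l ^ (n + 2))) ((n + 2) * l ^ 2 * ((n + 1) * sat l y ^ n *
      Real.exp (-(l * y)) ^ 2 - sat l y ^ (n + 1) * Real.exp (-(l * y)))) y := by
  have hexp : HasDerivAt (fun y => l * Real.exp (-(l * y))) (-(l ^ 2 * Real.exp (-(l * y)))) y :=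
    (((hasDerivAt_id y).const_mul l).neg.exp.const_mul l).congr_deriv (by simp; ring)
  rw [deriv_sat_pow]
  refine (((hasDerivAt_sat_pow n l y).const_mul ((n + 1 : ℕ) + 1 : ℝ)).mul hexp).congr_deriv ?_
  push_cast
  simp only [Pi.pow_apply]
  ring

lemma mul_deriv_sat_pow_nonneg (hl : 0 ≤ l) (hy : 0 ≤ y) (n : ℕ) :
    0 ≤ y * deriv (sat l ^ (n + 1)) y := by
  have := sat_nonneg hl hy
  rw [deriv_sat_pow]
  positivity

lemma mul_deriv_sat_pow_le (hl : 0 ≤ l) (hy : 0 ≤ y) (n : ℕ) :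
    y * deriv (sat l ^ (n + 1)) y ≤ (n + 1) * sat l y ^ (n + 1) := by
  have hS := sat_nonneg hl hy
  calc y * deriv (sat l ^ (n + 1)) y
      = (n + 1) * (sat l y ^ n * (l * y * Real.exp (-(l * y)))) := by rw [deriv_sat_pow]; ring
    _ ≤ (n + 1) * (sat l y ^ n * sat l y) := by gcongr; exact mul_exp_neg_le_sat l y
    _ = (n + 1) * sat l y ^ (n + 1) := by ring

lemma mul_pow_succ_le_pow_add_pow {a b : ℝ} (ha : 0 ≤ a) (hb : 0 ≤ b) (n : ℕ) :
    a * b ^ n ≤ a ^ (n + 1) + b ^ (n + 1) := by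
  rcases le_total a b with h | h
  · have : a * b ^ n ≤ b * b ^ n := by gcongr
    linarith [pow_nonneg ha (n + 1), pow_succ' b n]
  · have : a * b ^ n ≤ a * a ^ n := by gcongr
    linarith [pow_nonneg hb (n + 1), pow_succ' a n]

lemma abs_mul_deriv_deriv_sat_pow_le (hl : 0 ≤ l) (hy : 0 ≤ y) (n : ℕ) :
    |y * deriv (deriv (sat l ^ (n + 2))) y| ≤
      (n + 2) ^ 2 * (l ^ (n + 2) + sat l y ^ (n + 2)) := by
  have hS := sat_nonneg hl hy
  have hle := mul_exp_neg_le_sat l y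
  have hpow := mul_pow_succ_le_pow_add_pow hl hS (n + 1)
  have hexp : Real.exp (-(l * y)) ≤ 1 := by rw [Real.exp_le_one_iff]; nlinarith
  rw [(hasDerivAt_deriv_sat_pow n l y).deriv]
  set S := sat l y
  set e := Real.exp (-(l * y))
  have hfst : l * y * e * (l * S ^ n) * e ≤ l * S ^ (n + 1) :=
    calc l * y * e * (l * S ^ n) * e ≤ S * (l * S ^ n) * 1 := by gcongr
      _ = l * S ^ (n + 1) := by ring
  have hsnd : l * y * e * (l * S ^ (n + 1)) ≤ 1 * (l * S ^ (n + 1)) := by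
    gcongr
    exact hle.trans (sat_le_one l y)
  have hdiff : |(n + 1) * (l * y * e * (l * S ^ n) * e) - l * y * e * (l * S ^ (n + 1))|
      ≤ (n + 2) * (l * S ^ (n + 1)) := by
    have hX : 0 ≤ l * S ^ (n + 1) := by positivity
    have hnX : 0 ≤ n * (l * S ^ (n + 1)) := by positivity
    have hfst' := mul_le_mul_of_nonneg_left hfst (by positivity : (0 : ℝ) ≤ n + 1)
    exact abs_sub_le_of_nonneg_of_le (by positivity) (by linarith) (by positivity) (by linarith)
  calc |y * ((n + 2) * l ^ 2 * ((n + 1) * S ^ n * e ^ 2 - S ^ (n + 1) * e))|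
      = |(n + 2) * ((n + 1) * (l * y * e * (l * S ^ n) * e) - l * y * e * (l * S ^ (n + 1)))| := by
        ring_nf
    _ ≤ (n + 2) * ((n + 2) * (l * S ^ (n + 1))) := by
        rw [abs_mul, abs_of_nonneg (by positivity : (0 : ℝ) ≤ n + 2)]
        gcongr
    _ = (n + 2) ^ 2 * (l * S ^ (n + 1)) := by ring
    _ ≤ (n + 2) ^ 2 * (l ^ (n + 2) + S ^ (n + 2)) := by gcongr

lemma sat_pow_add_le (hl : 0 ≤ l) (hy : 0 ≤ y) (hz : 0 ≤ z) (hz1 : z ≤ 1) (n : ℕ) :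
    sat l (y + z) ^ n ≤ 2 ^ n * (l ^ n + sat l y ^ n) := by
  have hS := sat_nonneg hl hy
  have hexp : Real.exp (-(l * y)) ≤ 1 := by rw [Real.exp_le_one_iff]; nlinarith
  have hbase : sat l (y + z) ≤ l + sat l y :=
    calc sat l (y + z) = sat l y + sat l z * Real.exp (-(l * y)) := sat_add l y z
      _ ≤ sat l y + l * z * 1 := by gcongr; exact sat_le_mul l z
      _ ≤ l + sat l y := by nlinarith
  calc sat l (y + z) ^ n ≤ (l + sat l y) ^ n :=
        pow_le_pow_left₀ (sat_nonneg hl (by positivity)) hbase n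
    _ ≤ 2 ^ (n - 1) * (l ^ n + sat l y ^ n) := add_pow_le hl hS n
    _ ≤ 2 ^ n * (l ^ n + sat l y ^ n) := by
        gcongr
        exacts [one_le_two, n.sub_le 1]

end Sat

/-! ### Bounds for the generator on the test functions -/

lemma abs_sub_sub_mul_le_of_hasDerivAt {g g' g'' : ℝ → ℝ} {y z M : ℝ} (hz : 0 ≤ z)
    (hg : ∀ s ∈ Icc y (y + z), HasDerivAt g (g' s) s)
    (hg' : ∀ s ∈ Icc y (y + z), HasDerivAt g' (g'' s) s)
    (hM : ∀ s ∈ Icc y (y + z), |g'' s| ≤ M) : |g (y + z) - g y - z * g' y| ≤ M * z ^ 2 := by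
  have hy : y ∈ Icc y (y + z) := left_mem_Icc.2 (by linarith)
  have hyz : y + z ∈ Icc y (y + z) := right_mem_Icc.2 (by linarith)
  have hslope : ∀ s ∈ Icc y (y + z), ‖g' s - 1 * g' y‖ ≤ M * z := fun s hs =>
    calc ‖g' s - 1 * g' y‖ = ‖g' s - g' y‖ := by rw [one_mul]
      _ ≤ M * ‖s - y‖ := Convex.norm_image_sub_le_of_norm_hasDerivWithin_le
          (fun u hu => (hg' u hu).hasDerivWithinAt) hM (convex_Icc _ _) hy hs
      _ ≤ M * z := by
          rw [Real.norm_eq_abs, abs_of_nonneg (by linarith [hs.1])]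
          have := (abs_nonneg _).trans (hM y hy)
          gcongr
          linarith [hs.2]
  have hmvt := Convex.norm_image_sub_le_of_norm_hasDerivWithin_le
    (f := fun s => g s - s * g' y) (f' := fun s => g' s - 1 * g' y)
    (fun s hs => ((hg s hs).sub ((hasDerivAt_id s).mul_const _)).hasDerivWithinAt)
    hslope (convex_Icc _ _) hy hyz
  rw [add_sub_cancel_left, Real.norm_eq_abs, Real.norm_eq_abs, abs_of_nonneg hz] at hmvt
  convert hmvt using 1 <;> ring_nf

section JumpBounds

variable {l y z : ℝ}

lemma abs_mul_jumpIncr_sat_pow_le (hl : 0 ≤ l) (hy : 0 ≤ y) (hz : 0 ≤ z) (hz1 : z ≤ 1) (n : ℕ) :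
    |y * jumpIncr (sat l ^ (n + 2)) y z| ≤
      (n + 2) ^ 2 * (1 + 2 ^ (n + 2)) * (l ^ (n + 2) + sat l y ^ (n + 2)) * z ^ 2 := by
  have hbound : ∀ s ∈ Icc y (y + z), |y * deriv (deriv (sat l ^ (n + 2))) s| ≤
      (n + 2) ^ 2 * (1 + 2 ^ (n + 2)) * (l ^ (n + 2) + sat l y ^ (n + 2)) := fun s hs => by
    have hshift := sat_pow_add_le hl hy (z := s - y) (by linarith [hs.1]) (by linarith [hs.2])
      (n + 2)
    rw [add_sub_cancel] at hshift
    have hS := sat_pow_nonneg hl hy (n + 2)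
    calc |y * deriv (deriv (sat l ^ (n + 2))) s|
        ≤ |s * deriv (deriv (sat l ^ (n + 2))) s| := by
          rw [abs_mul, abs_mul, abs_of_nonneg hy, abs_of_nonneg (hy.trans hs.1)]
          gcongr
          exact hs.1
      _ ≤ (n + 2) ^ 2 * (l ^ (n + 2) + sat l s ^ (n + 2)) :=
          abs_mul_deriv_deriv_sat_pow_le hl (hy.trans hs.1) n
      _ ≤ (n + 2) ^ 2 * ((1 + 2 ^ (n + 2)) * (l ^ (n + 2) + sat l y ^ (n + 2))) := by
          gcongr
          linarith
      _ = _ := by ring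
  have htaylor := abs_sub_sub_mul_le_of_hasDerivAt hz
    (fun s _ => ((hasDerivAt_sat_pow (n + 1) l s).differentiableAt.hasDerivAt).const_mul y)
    (fun s _ => ((hasDerivAt_deriv_sat_pow n l s).differentiableAt.hasDerivAt).const_mul y) hbound
  rw [jumpIncr, if_pos hz1]
  convert htaylor using 2
  ring

lemma mul_jumpIncr_sat_pow_le (hl : 0 ≤ l) (hy : 0 ≤ y) (hz : 1 < z) (n : ℕ) :
    y * jumpIncr (sat l ^ (n + 1)) y z ≤ (n + 1) * 2 ^ n *
      (z * sat l y ^ (n + 1) + y * Real.exp (-(l * y)) * sat l z ^ (n + 1)) := by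
  have hz0 : 0 ≤ z := by linarith
  have hexp : Real.exp (-(l * y)) ≤ 1 := by rw [Real.exp_le_one_iff]; nlinarith
  have hS := sat_nonneg hl hy
  have hR := sat_nonneg hl hz0
  have hlin : y * Real.exp (-(l * y)) * sat l z ≤ z * sat l y :=
    calc y * Real.exp (-(l * y)) * sat l z ≤ y * Real.exp (-(l * y)) * (l * z) := by
          gcongr
          exact sat_le_mul l z
      _ = z * (l * y * Real.exp (-(l * y))) := by ring
      _ ≤ z * sat l y := by gcongr; exact mul_exp_neg_le_sat l y
  simp only [jumpIncr, if_neg hz.not_ge, sub_zero, Pi.pow_apply, sat_add l y z]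
  set S := sat l y
  set R := sat l z
  set e := Real.exp (-(l * y))
  have : 0 ≤ e := (Real.exp_pos _).le
  have hincr : (S + R * e) ^ (n + 1) - S ^ (n + 1) ≤ R * e * (n + 1) * (S + R * e) ^ n := by
    have hRe : 0 ≤ R * e := by positivity
    have := (le_abs_self _).trans (abs_pow_sub_pow_le (S + R * e) S (n + 1))
    rwa [add_sub_cancel_left, abs_of_nonneg hRe, abs_of_nonneg hS,
      abs_of_nonneg (by positivity : 0 ≤ S + R * e), max_eq_left (by linarith), Nat.add_sub_cancel,
      Nat.cast_add_one] at this
  have hsum : (S + R * e) ^ n ≤ 2 ^ n * (S ^ n + R ^ n) :=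
    calc (S + R * e) ^ n ≤ (S + R) ^ n := by gcongr; exact mul_le_of_le_one_right hR hexp
      _ ≤ 2 ^ (n - 1) * (S ^ n + R ^ n) := add_pow_le hS hR n
      _ ≤ 2 ^ n * (S ^ n + R ^ n) := by gcongr; exacts [one_le_two, n.sub_le 1]
  calc y * ((S + R * e) ^ (n + 1) - S ^ (n + 1))
      ≤ y * (R * e * (n + 1) * (2 ^ n * (S ^ n + R ^ n))) := by
        gcongr
        exact hincr.trans (by gcongr)
    _ = (n + 1) * 2 ^ n * (y * e * R * S ^ n + y * e * R ^ (n + 1)) := by ring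
    _ ≤ (n + 1) * 2 ^ n * (z * S * S ^ n + y * e * R ^ (n + 1)) := by gcongr
    _ = (n + 1) * 2 ^ n * (z * S ^ (n + 1) + y * e * R ^ (n + 1)) := by ring

lemma le_mul_jumpIncr_sat_pow (hl : 0 ≤ l) (hy : 0 ≤ y) (hz : 1 < z) (n : ℕ) :
    y * Real.exp (-((n + 1) * l * y)) * sat l z ^ (n + 1) ≤
      y * jumpIncr (sat l ^ (n + 1)) y z := by
  have hR := sat_nonneg hl (zero_le_one.trans hz.le)
  have hexp : Real.exp (-((n + 1) * l * y)) = Real.exp (-(l * y)) ^ (n + 1) := by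
    rw [← Real.exp_nat_mul]
    push_cast
    ring_nf
  have hpow := pow_add_pow_le (sat_nonneg hl hy) (mul_nonneg hR (Real.exp_pos (-(l * y))).le)
    n.succ_ne_zero
  simp only [jumpIncr, if_neg hz.not_ge, sub_zero, Pi.pow_apply, sat_add l y z, mul_assoc y, hexp]
  gcongr
  rw [← mul_pow, mul_comm (Real.exp _)]
  exact le_sub_iff_add_le'.2 hpow

end JumpBounds

section GeneratorBounds

variable {l y : ℝ}

lemma abs_mul_diffusion_sat_pow_le (β σ : ℝ) (hl : 0 ≤ l) (hy : 0 ≤ y) (n : ℕ) :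
    |y * (-β * deriv (sat l ^ (n + 2)) y + σ ^ 2 / 2 * deriv (deriv (sat l ^ (n + 2))) y)| ≤
      (|β| * (n + 2) + σ ^ 2 / 2 * (n + 2) ^ 2) * (l ^ (n + 2) + sat l y ^ (n + 2)) := by
  have hfst : |y * deriv (sat l ^ (n + 2)) y| ≤ (n + 2) * (l ^ (n + 2) + sat l y ^ (n + 2)) := by
    rw [abs_of_nonneg (mul_deriv_sat_pow_nonneg hl hy (n + 1))]
    calc y * deriv (sat l ^ (n + 2)) y ≤ ((n + 1 : ℕ) + 1) * sat l y ^ (n + 2) :=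
          mul_deriv_sat_pow_le hl hy (n + 1)
      _ = (n + 2) * sat l y ^ (n + 2) := by push_cast; ring
      _ ≤ (n + 2) * (l ^ (n + 2) + sat l y ^ (n + 2)) := by
          gcongr
          exact le_add_of_nonneg_left (by positivity)
  have hsnd := abs_mul_deriv_deriv_sat_pow_le hl hy n
  calc |y * (-β * deriv (sat l ^ (n + 2)) y + σ ^ 2 / 2 * deriv (deriv (sat l ^ (n + 2))) y)|
      = |-β * (y * deriv (sat l ^ (n + 2)) y) +
          σ ^ 2 / 2 * (y * deriv (deriv (sat l ^ (n + 2))) y)| := by ring_nf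
    _ ≤ |β| * |y * deriv (sat l ^ (n + 2)) y| +
          σ ^ 2 / 2 * |y * deriv (deriv (sat l ^ (n + 2))) y| := by
        refine (abs_add_le _ _).trans_eq ?_
        rw [abs_mul (-β), abs_mul (σ ^ 2 / 2), abs_neg,
          abs_of_nonneg (by positivity : 0 ≤ σ ^ 2 / 2)]
    _ ≤ |β| * ((n + 2) * (l ^ (n + 2) + sat l y ^ (n + 2))) +
          σ ^ 2 / 2 * ((n + 2) ^ 2 * (l ^ (n + 2) + sat l y ^ (n + 2))) := by gcongr
    _ = _ := by ring

variable {φ : ℝ → ℝ} {β σ : ℝ} {m : Measure ℝ}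

lemma IsBranchingMechanism.integrableOn_sat_pow (hφ : IsBranchingMechanism φ β σ m) (hl : 0 ≤ l)
    (n : ℕ) : IntegrableOn (fun z => sat l z ^ n) (Ioi 1) m := by
  have : IsFiniteMeasure (m.restrict (Ioi 1)) := ⟨by simpa using hφ.measure_Ioi_lt_top⟩
  refine integrable_sat_pow ?_ hl n
  filter_upwards [ae_restrict_mem measurableSet_Ioi] with z (hz : 1 < z) using by linarith

lemma IsBranchingMechanism.integrable_jumpIncr_sat_pow (hφ : IsBranchingMechanism φ β σ m)
    (hl : 0 ≤ l) (n : ℕ) (y : ℝ) : Integrable (jumpIncr (sat l ^ n) y) m := by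
  rw [sat_pow_eq_expSum]
  exact integrable_jumpIncr_expSum hφ (fun j _ => by positivity) y

lemma setIntegral_sat_pow_nonneg (m : Measure ℝ) (hl : 0 ≤ l) (n : ℕ) :
    0 ≤ ∫ z in Ioi 1, sat l z ^ n ∂m :=
  setIntegral_nonneg measurableSet_Ioi fun _ (hz : 1 < _) =>
    sat_pow_nonneg hl (zero_le_one.trans hz.le) n

lemma IsBranchingMechanism.le_mul_integral_jumpIncr_sat_pow (hφ : IsBranchingMechanism φ β σ m)
    (hl : 0 ≤ l) (hy : 0 ≤ y) (n : ℕ) :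
    y * Real.exp (-((n + 2) * l * y)) * ∫ z in Ioi 1, sat l z ^ (n + 2) ∂m -
      (n + 2) ^ 2 * (1 + 2 ^ (n + 2)) * (l ^ (n + 2) + sat l y ^ (n + 2)) *
        ∫ z : ℝ, min 1 (z ^ 2) ∂m ≤ y * ∫ z, jumpIncr (sat l ^ (n + 2)) y z ∂m := by
  have hS := sat_pow_nonneg hl hy (n + 2)
  set B : ℝ := (n + 2) ^ 2 * (1 + 2 ^ (n + 2)) * (l ^ (n + 2) + sat l y ^ (n + 2))
  have hbig : Integrable (fun z => y * Real.exp (-((n + 2) * l * y)) *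
      (Ioi 1).indicator (fun z => sat l z ^ (n + 2)) z) m :=
    ((integrable_indicator_iff measurableSet_Ioi).2 (hφ.integrableOn_sat_pow hl _)).const_mul _
  have hsmall := hφ.integrable_min.const_mul B
  rw [← integral_indicator measurableSet_Ioi, ← integral_const_mul, ← integral_const_mul,
    ← integral_const_mul, ← integral_sub hbig hsmall]
  refine integral_mono_ae (hbig.sub hsmall)
    ((hφ.integrable_jumpIncr_sat_pow hl _ y).const_mul y) ?_
  filter_upwards [hφ.ae_pos] with z hz
  rcases le_or_gt z 1 with h | h
  · have := (abs_le.1 (abs_mul_jumpIncr_sat_pow_le hl hy hz.le h n)).1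
    rw [indicator_of_notMem (by simpa using h), min_eq_right (by nlinarith)]
    linarith
  · have hlow := le_mul_jumpIncr_sat_pow hl hy h (n + 1)
    have hpos : 0 ≤ B * min 1 (z ^ 2) := by positivity
    rw [Nat.cast_add_one, show (n : ℝ) + 1 + 1 = n + 2 by ring] at hlow
    rw [indicator_of_mem (by simpa using h)]
    linarith

lemma IsBranchingMechanism.mul_integral_jumpIncr_sat_pow_le (hφ : IsBranchingMechanism φ β σ m)
    (hm : IntegrableOn id (Ioi 1) m) (hl : 0 ≤ l) (hy : 0 ≤ y) (n : ℕ) :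
    y * ∫ z, jumpIncr (sat l ^ (n + 2)) y z ∂m ≤
      (n + 2) ^ 2 * (1 + 2 ^ (n + 2)) * (l ^ (n + 2) + sat l y ^ (n + 2)) *
          ∫ z : ℝ, min 1 (z ^ 2) ∂m +
        ((n + 2) * 2 ^ (n + 1) * sat l y ^ (n + 2) * ∫ z in Ioi 1, z ∂m +
        (n + 2) * 2 ^ (n + 1) * (y * Real.exp (-(l * y))) *
          ∫ z in Ioi 1, sat l z ^ (n + 2) ∂m) := by
  have hS := sat_pow_nonneg hl hy (n + 2)
  set B : ℝ := (n + 2) ^ 2 * (1 + 2 ^ (n + 2)) * (l ^ (n + 2) + sat l y ^ (n + 2))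
  have hsmall := hφ.integrable_min.const_mul B
  have hid := (integrable_indicator_iff measurableSet_Ioi).2 hm |>.const_mul
    ((n + 2) * 2 ^ (n + 1) * sat l y ^ (n + 2))
  have hsat := (integrable_indicator_iff measurableSet_Ioi).2 (hφ.integrableOn_sat_pow hl (n + 2))
    |>.const_mul ((n + 2) * 2 ^ (n + 1) * (y * Real.exp (-(l * y))))
  rw [← integral_indicator measurableSet_Ioi, ← integral_indicator measurableSet_Ioi,
    ← integral_const_mul, ← integral_const_mul, ← integral_const_mul, ← integral_const_mul,
    ← integral_add (by exact hid) hsat, ← integral_add hsmall (by exact hid.add hsat)]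
  refine integral_mono_ae ((hφ.integrable_jumpIncr_sat_pow hl _ y).const_mul y)
    (hsmall.add (hid.add hsat)) ?_
  filter_upwards [hφ.ae_pos] with z hz
  rcases le_or_gt z 1 with h | h
  · have hz1 : z ∉ Ioi (1 : ℝ) := by simpa using h
    rw [indicator_of_notMem hz1, indicator_of_notMem hz1, min_eq_right (by nlinarith), mul_zero,
      mul_zero, add_zero, add_zero]
    exact (abs_le.1 (abs_mul_jumpIncr_sat_pow_le hl hy hz.le h n)).2
  · have hup := mul_jumpIncr_sat_pow_le hl hy h (n + 1)
    have hpos : 0 ≤ B * min 1 (z ^ 2) := by positivity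
    rw [Nat.cast_add_one, show (n : ℝ) + 1 + 1 = n + 2 by ring] at hup
    rw [indicator_of_mem (by simpa using h), indicator_of_mem (by simpa using h)]
    linarith

lemma IsBranchingMechanism.exists_le_cbGenerator_sat_pow (hφ : IsBranchingMechanism φ β σ m)
    (n : ℕ) : ∃ C, 0 ≤ C ∧ ∀ l y, 0 ≤ l → 0 ≤ y →
      y * Real.exp (-((n + 2) * l * y)) * ∫ z in Ioi 1, sat l z ^ (n + 2) ∂m -
        C * (l ^ (n + 2) + sat l y ^ (n + 2)) ≤ cbGenerator β σ m (sat l ^ (n + 2)) y := by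
  have : 0 ≤ ∫ z : ℝ, min 1 (z ^ 2) ∂m := integral_nonneg fun z => by positivity
  refine ⟨|β| * (n + 2) + σ ^ 2 / 2 * (n + 2) ^ 2 +
    (n + 2) ^ 2 * (1 + 2 ^ (n + 2)) * ∫ z : ℝ, min 1 (z ^ 2) ∂m, by positivity,
    fun l y hl hy => ?_⟩
  have hdiff := (abs_le.1 (abs_mul_diffusion_sat_pow_le β σ hl hy n)).1
  have hjump := hφ.le_mul_integral_jumpIncr_sat_pow hl hy n
  rw [cbGenerator, mul_add]
  linarith

lemma IsBranchingMechanism.exists_cbGenerator_sat_pow_le (hφ : IsBranchingMechanism φ β σ m)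
    (hm : IntegrableOn id (Ioi 1) m) (n : ℕ) : ∃ C, 0 ≤ C ∧ ∀ l y, 0 ≤ l → 0 ≤ y →
      cbGenerator β σ m (sat l ^ (n + 2)) y ≤ C * (l ^ (n + 2) + sat l y ^ (n + 2) +
        (∫ z in Ioi 1, sat l z ^ (n + 2) ∂m) * (y * Real.exp (-(l * y)))) := by
  have : 0 ≤ ∫ z : ℝ, min 1 (z ^ 2) ∂m := integral_nonneg fun z => by positivity
  have hI₁ : 0 ≤ ∫ z in Ioi 1, z ∂m :=
    setIntegral_nonneg measurableSet_Ioi fun z (hz : 1 < z) => by linarith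
  set D := |β| * (n + 2) + σ ^ 2 / 2 * (n + 2) ^ 2 +
    (n + 2) ^ 2 * (1 + 2 ^ (n + 2)) * ∫ z : ℝ, min 1 (z ^ 2) ∂m with hDdef
  set E := (n + 2) * 2 ^ (n + 1) * ∫ z in Ioi 1, z ∂m with hEdef
  have : 0 ≤ D := by positivity
  have : 0 ≤ E := by positivity
  refine ⟨D + E + (n + 2) * 2 ^ (n + 1), by positivity, fun l y hl hy => ?_⟩
  have hdiff := (abs_le.1 (abs_mul_diffusion_sat_pow_le β σ hl hy n)).2
  have hjump := hφ.mul_integral_jumpIncr_sat_pow_le hm hl hy n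
  have hS := sat_pow_nonneg hl hy (n + 2)
  have hM := setIntegral_sat_pow_nonneg m hl (n + 2)
  rw [cbGenerator, mul_add]
  set q := sat l y ^ (n + 2)
  set M := ∫ z in Ioi 1, sat l z ^ (n + 2) ∂m
  have : 0 ≤ M * (y * Real.exp (-(l * y))) := by positivity
  have hD' : 0 ≤ D * (M * (y * Real.exp (-(l * y)))) := by positivity
  have hE' : 0 ≤ E * (l ^ (n + 2) + M * (y * Real.exp (-(l * y)))) := by positivity
  have hF' : 0 ≤ (n + 2) * 2 ^ (n + 1) * (l ^ (n + 2) + q) := by positivity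
  calc _ ≤ D * (l ^ (n + 2) + q) + E * q +
        (n + 2) * 2 ^ (n + 1) * (M * (y * Real.exp (-(l * y)))) := by
        rw [hDdef, hEdef]
        linarith
    _ ≤ _ := by linarith

end GeneratorBounds

/-! ### Moments of the test functions -/

section SatMoments

variable {φ : ℝ → ℝ} {β σ : ℝ} {m : Measure ℝ} {v : ℝ → ℝ → ℝ} {Q : ℝ → ℝ → Measure ℝ}
  {t x l : ℝ}

namespace IsCBSemigroup

lemma integrable_sat_pow (hQ : IsCBSemigroup v Q) (ht : 0 ≤ t) (hx : 0 ≤ x) (hl : 0 ≤ l) (n : ℕ) :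
    Integrable (fun y => sat l y ^ n) (Q t x) :=
  have := hQ.isProbabilityMeasure ht hx
  _root_.integrable_sat_pow (hQ.ae_nonneg ht hx) hl n

lemma integral_sat_pow_nonneg (hQ : IsCBSemigroup v Q) (ht : 0 ≤ t) (hx : 0 ≤ x) (hl : 0 ≤ l)
    (n : ℕ) : 0 ≤ ∫ y, sat l y ^ n ∂Q t x :=
  integral_nonneg_of_ae ((hQ.ae_nonneg ht hx).mono fun _ hy => sat_pow_nonneg hl hy n)

lemma integral_sat_pow_zero (hQ : IsCBSemigroup v Q) (hv : IsCumulant φ v) (hx : 0 ≤ x)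
    (hl : 0 ≤ l) (n : ℕ) : ∫ y, sat l y ^ n ∂Q 0 x = sat l x ^ n := by
  simp_rw [← Pi.pow_apply (sat l) n, sat_pow_eq_expSum]
  exact hQ.integral_expSum_zero hv (fun j _ => by positivity) hx

lemma continuousOn_integral_sat_pow (hQ : IsCBSemigroup v Q) (hφ : IsBranchingMechanism φ β σ m)
    (hv : IsCumulant φ v) (hx : 0 ≤ x) (hl : 0 ≤ l) (n : ℕ) :
    ContinuousOn (fun t => ∫ y, sat l y ^ n ∂Q t x) (Ici 0) := by
  simp_rw [← Pi.pow_apply (sat l) n, sat_pow_eq_expSum]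
  exact hQ.continuousOn_integral_expSum hφ hv (fun j _ => by positivity) hx

lemma hasDerivAt_integral_sat_pow (hQ : IsCBSemigroup v Q) (hφ : IsBranchingMechanism φ β σ m)
    (hv : IsCumulant φ v) (ht : 0 < t) (hx : 0 ≤ x) (hl : 0 ≤ l) (n : ℕ) :
    HasDerivAt (fun t => ∫ y, sat l y ^ n ∂Q t x) (∫ y, cbGenerator β σ m (sat l ^ n) y ∂Q t x)
      t := by
  simp_rw [← Pi.pow_apply (sat l) n, sat_pow_eq_expSum]
  exact hQ.hasDerivAt_integral_expSum hφ hv (fun j _ => by positivity) ht hx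

lemma integrable_cbGenerator_sat_pow (hQ : IsCBSemigroup v Q) (hφ : IsBranchingMechanism φ β σ m)
    (ht : 0 ≤ t) (hx : 0 ≤ x) (hl : 0 ≤ l) (n : ℕ) :
    Integrable (cbGenerator β σ m (sat l ^ n)) (Q t x) := by
  rw [sat_pow_eq_expSum]
  exact hQ.integrable_cbGenerator_expSum hφ (fun j _ => by positivity) ht hx

lemma exists_integral_cbGenerator_sat_pow_le (hQ : IsCBSemigroup v Q)
    (hφ : IsBranchingMechanism φ β σ m) (hm : IntegrableOn id (Ioi 1) m) (n : ℕ) :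
    ∃ C, 0 ≤ C ∧ ∀ l t x, 0 < l → 0 ≤ t → 0 ≤ x →
      ∫ y, cbGenerator β σ m (sat l ^ (n + 2)) y ∂Q t x ≤
        C * (l ^ (n + 2) + ∫ y, sat l y ^ (n + 2) ∂Q t x +
          (∫ z in Ioi 1, sat l z ^ (n + 2) ∂m) * ∫ y, y * Real.exp (-(l * y)) ∂Q t x) := by
  obtain ⟨C, hC, hgen⟩ := hφ.exists_cbGenerator_sat_pow_le hm n
  refine ⟨C, hC, fun l t x hl ht hx => ?_⟩
  have := hQ.isProbabilityMeasure ht hx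
  have hae := hQ.ae_nonneg ht hx
  have hsat := hQ.integrable_sat_pow ht hx hl.le (n + 2)
  have hsum : Integrable (fun y => l ^ (n + 2) + sat l y ^ (n + 2)) (Q t x) :=
    (integrable_const _).add hsat
  have hexp := (integrable_mul_exp_neg_mul hae hl).const_mul (∫ z in Ioi 1, sat l z ^ (n + 2) ∂m)
  refine (integral_mono_ae (hQ.integrable_cbGenerator_sat_pow hφ ht hx hl.le _)
    ((hsum.add hexp).const_mul C) (hae.mono fun y hy => hgen l y hl.le hy)).trans_eq ?_
  simp only [Pi.add_apply]
  rw [integral_const_mul, integral_add hsum hexp, integral_add (integrable_const _) hsat,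
    integral_const_mul]
  simp

lemma exists_le_integral_cbGenerator_sat_pow (hQ : IsCBSemigroup v Q)
    (hφ : IsBranchingMechanism φ β σ m) (n : ℕ) :
    ∃ C, 0 ≤ C ∧ ∀ l t x, 0 ≤ l → l ≤ 1 → 0 ≤ t → 0 ≤ x →
      (∫ y, y * Real.exp (-((n + 2) * y)) ∂Q t x) * ∫ z in Ioi 1, sat l z ^ (n + 2) ∂m -
        C * (l ^ (n + 2) + ∫ y, sat l y ^ (n + 2) ∂Q t x) ≤
      ∫ y, cbGenerator β σ m (sat l ^ (n + 2)) y ∂Q t x := by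
  obtain ⟨C, hC, hgen⟩ := hφ.exists_le_cbGenerator_sat_pow n
  refine ⟨C, hC, fun l t x hl hl1 ht hx => ?_⟩
  have := hQ.isProbabilityMeasure ht hx
  have hae := hQ.ae_nonneg ht hx
  have hM := setIntegral_sat_pow_nonneg m hl (n + 2)
  have hsat := hQ.integrable_sat_pow ht hx hl (n + 2)
  have hsum : Integrable (fun y => C * (l ^ (n + 2) + sat l y ^ (n + 2))) (Q t x) :=
    ((integrable_const _).add hsat).const_mul C
  have hexp := (integrable_mul_exp_neg_mul hae (by positivity : (0 : ℝ) < n + 2)).mul_const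
    (∫ z in Ioi 1, sat l z ^ (n + 2) ∂m)
  have hle := integral_mono_ae (hexp.sub hsum)
    (hQ.integrable_cbGenerator_sat_pow hφ ht hx hl (n + 2)) (hae.mono fun y hy => by
      refine le_trans ?_ (hgen l y hl hy)
      simp only [Pi.sub_apply]
      gcongr
      exact mul_le_of_le_one_right (by positivity) hl1)
  simp only [Pi.sub_apply] at hle
  rwa [integral_sub hexp hsum, integral_mul_const, integral_const_mul,
    integral_add (integrable_const _) hsat, integral_const, probReal_univ, one_smul] at hle

lemma exists_integral_sat_pow_le (hQ : IsCBSemigroup v Q) (hφ : IsBranchingMechanism φ β σ m)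
    (hv : IsCumulant φ v) (hm : IntegrableOn id (Ioi 1) m) (n : ℕ) (ht : 0 ≤ t) :
    ∃ C, 0 ≤ C ∧ ∀ l x, 0 < l → 0 ≤ x → ∫ y, sat l y ^ (n + 2) ∂Q t x ≤
      C * (sat l x ^ (n + 2) + l ^ (n + 2) + x * ∫ z in Ioi 1, sat l z ^ (n + 2) ∂m) := by
  obtain ⟨C, hC, hgen⟩ := hQ.exists_integral_cbGenerator_sat_pow_le hφ hm n
  obtain ⟨A, hA, hAφ⟩ := hφ.exists_neg_mul_le hm
  refine ⟨Real.exp (C * t) * (1 + C * t + C * Real.exp (A * t) * t), by positivity,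
    fun l x hl hx => ?_⟩
  have hM := setIntegral_sat_pow_nonneg m hl.le (n + 2)
  have hq := sat_pow_nonneg hl.le hx (n + 2)
  set M := ∫ z in Ioi 1, sat l z ^ (n + 2) ∂m
  have hmean : ∀ s ∈ Ioo 0 t, M * ∫ y, y * Real.exp (-(l * y)) ∂Q s x ≤
      M * (x * Real.exp (A * t)) := fun s hs => by
    gcongr
    refine (hQ.integral_mul_exp_le hφ hv hA hAφ hs.1.le hx hl).trans ?_
    gcongr
    exact hs.2.le
  have hgronwall := le_exp_mul_of_hasDerivAt_le hC
    (by positivity : 0 ≤ C * (l ^ (n + 2) + M * (x * Real.exp (A * t)))) ht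
    ((hQ.continuousOn_integral_sat_pow hφ hv hx hl.le (n + 2)).mono Icc_subset_Ici_self)
    (fun s hs => hQ.hasDerivAt_integral_sat_pow hφ hv hs.1 hx hl.le _) fun s hs =>
      (hgen l s x hl hs.1.le hx).trans (by
        have := mul_le_mul_of_nonneg_left (hmean s hs) hC
        linarith)
  rw [hQ.integral_sat_pow_zero hv hx hl.le] at hgronwall
  rw [mul_assoc]
  refine hgronwall.trans (mul_le_mul_of_nonneg_left ?_ (Real.exp_pos _).le)
  have := Real.exp_pos (A * t)
  have h₁ : 0 ≤ C * t * (sat l x ^ (n + 2) + x * M) := by positivity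
  have h₂ : 0 ≤ C * Real.exp (A * t) * t * (sat l x ^ (n + 2) + l ^ (n + 2)) := by positivity
  have h₃ : 0 ≤ l ^ (n + 2) + x * M := by positivity
  linarith

lemma exists_setIntegral_sat_pow_le (hQ : IsCBSemigroup v Q) (hφ : IsBranchingMechanism φ β σ m)
    (hv : IsCumulant φ v) (n : ℕ) (ht : 0 < t) (hx : 0 < x) :
    ∃ C, 0 ≤ C ∧ ∀ l, 0 ≤ l → l ≤ 1 →
      ∫ z in Ioi 1, sat l z ^ (n + 2) ∂m ≤ C * (∫ y, sat l y ^ (n + 2) ∂Q t x + l ^ (n + 2)) := by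
  obtain ⟨C, hC, hgen⟩ := hQ.exists_le_integral_cbGenerator_sat_pow hφ n
  obtain ⟨c, hc, hmean⟩ := hQ.exists_le_integral_mul_exp hφ hv ht.le hx
    (by positivity : (0 : ℝ) < n + 2)
  refine ⟨Real.exp (C * t) * (1 + C * t) / (c * t), by positivity, fun l hl hl1 => ?_⟩
  have hM := setIntegral_sat_pow_nonneg m hl (n + 2)
  have hq := sat_pow_nonneg hl hx.le (n + 2)
  have hI := hQ.integral_sat_pow_nonneg ht.le hx.le hl (n + 2)
  set M := ∫ z in Ioi 1, sat l z ^ (n + 2) ∂m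
  have hgronwall := add_mul_le_exp_mul_of_le_hasDerivAt hC
    (by positivity : 0 ≤ C * l ^ (n + 2)) (by positivity : 0 ≤ c * M) ht.le
    ((hQ.continuousOn_integral_sat_pow hφ hv hx.le hl (n + 2)).mono Icc_subset_Ici_self)
    (fun s hs => hQ.hasDerivAt_integral_sat_pow hφ hv hs.1 hx.le hl _) fun s hs => by
      have := mul_le_mul_of_nonneg_right (hmean s (Ioo_subset_Icc_self hs)) hM
      linarith [hgen l s x hl hl1 hs.1.le hx.le]
  rw [hQ.integral_sat_pow_zero hv hx.le hl] at hgronwall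
  set I := ∫ y, sat l y ^ (n + 2) ∂Q t x
  rw [div_mul_eq_mul_div, le_div_iff₀ (by positivity)]
  calc M * (c * t) ≤ Real.exp (C * t) * (I + C * l ^ (n + 2) * t) := by linarith
    _ ≤ Real.exp (C * t) * ((1 + C * t) * (I + l ^ (n + 2))) := by
        gcongr
        have : 0 ≤ C * t * I + l ^ (n + 2) := by positivity
        linarith
    _ = _ := by ring

end IsCBSemigroup

end SatMoments

/-! ### Dyadic series of test functions -/

section DyadicSeries

/-- Positive nondecreasing functions satisfying the doubling condition with constant `D` on
`[0,∞)`: the moment functions which are comparable to a series of test functions. Monotonicity is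
required on the whole line, so that `g` is measurable. -/
structure MonotoneDoubling (g : ℝ → ℝ) (D : ℝ) : Prop where
  monotone : Monotone g
  map_zero_pos : 0 < g 0
  map_two_mul_le : ∀ x, 0 ≤ x → g (2 * x) ≤ D * g x

/-- The increment of `g` over the `i`-th dyadic interval `[2 ^ i, 2 ^ (i + 1)]`. -/
def dyadicIncr (g : ℝ → ℝ) (i : ℕ) : ℝ := g (2 ^ (i + 1)) - g (2 ^ i)

/-- The superposition of the test functions `sat l ^ n` over the scales `l = 2 ^ (-i)`, weighted by
the dyadic increments of `g`. It has the growth of `g` when `g` is doubling and `n` is large. -/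
def dyadicSeries (g : ℝ → ℝ) (n : ℕ) (x : ℝ) : ENNReal :=
  ∑' i, ENNReal.ofReal (dyadicIncr g i) * ENNReal.ofReal (sat (2 ^ i)⁻¹ x ^ n)

variable {g : ℝ → ℝ} {D x : ℝ} {n : ℕ}

lemma sum_range_dyadicIncr (g : ℝ → ℝ) (N : ℕ) :
    ∑ i ∈ Finset.range N, dyadicIncr g i = g (2 ^ N) - g 1 := by
  simpa [dyadicIncr] using Finset.sum_range_sub (fun i => g (2 ^ i)) N

lemma measurable_dyadicSeries (g : ℝ → ℝ) (n : ℕ) : Measurable (dyadicSeries g n) :=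
  Measurable.tsum fun _ => (measurable_sat_pow n _).ennreal_ofReal.const_mul _

lemma lintegral_dyadicSeries (g : ℝ → ℝ) (n : ℕ) (ν : Measure ℝ) :
    ∫⁻ x, dyadicSeries g n x ∂ν =
      ∑' i, ENNReal.ofReal (dyadicIncr g i) * ∫⁻ x, ENNReal.ofReal (sat (2 ^ i)⁻¹ x ^ n) ∂ν := by
  unfold dyadicSeries
  rw [lintegral_tsum fun i => ((measurable_sat_pow n _).ennreal_ofReal.const_mul _).aemeasurable]
  simp_rw [lintegral_const_mul _ (measurable_sat_pow n _).ennreal_ofReal]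

namespace MonotoneDoubling

lemma pos (h : MonotoneDoubling g D) (hx : 0 ≤ x) : 0 < g x :=
  h.map_zero_pos.trans_le (h.monotone hx)

lemma one_le (h : MonotoneDoubling g D) : 1 ≤ D := by
  have := h.map_two_mul_le 0 le_rfl
  rw [mul_zero] at this
  exact le_of_mul_le_mul_right (by rwa [one_mul]) h.map_zero_pos

lemma dyadicIncr_nonneg (h : MonotoneDoubling g D) (i : ℕ) : 0 ≤ dyadicIncr g i :=
  sub_nonneg.2 (h.monotone (pow_le_pow_right₀ one_le_two i.le_succ))

lemma map_two_pow_mul_le (h : MonotoneDoubling g D) (i : ℕ) (hx : 0 ≤ x) :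
    g (2 ^ i * x) ≤ D ^ i * g x := by
  induction i with
  | zero => simp
  | succ i ih =>
    calc g (2 ^ (i + 1) * x) = g (2 * (2 ^ i * x)) := by ring_nf
      _ ≤ D * g (2 ^ i * x) := h.map_two_mul_le _ (by positivity)
      _ ≤ D * (D ^ i * g x) := mul_le_mul_of_nonneg_left ih (zero_le_one.trans h.one_le)
      _ = D ^ (i + 1) * g x := by ring

lemma dyadicIncr_mul_pow_le (h : MonotoneDoubling g D) (hD : 2 * D ≤ 2 ^ n) (J p : ℕ)
    (hx : 0 ≤ x) (hxJ : x ≤ 2 * 2 ^ J) :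
    dyadicIncr g (J + p) * ((2 ^ (J + p))⁻¹ * x) ^ n ≤ D * 2 ^ n * g (2 ^ J) * (1 / 2) ^ p := by
  have hD0 := zero_le_one.trans h.one_le
  have hg := h.pos (by positivity : (0 : ℝ) ≤ 2 ^ J)
  have hincr : dyadicIncr g (J + p) ≤ D ^ (p + 1) * g (2 ^ J) := by
    have hup := h.map_two_pow_mul_le (p + 1) (by positivity : (0 : ℝ) ≤ 2 ^ J)
    rw [← pow_add, add_right_comm, add_comm p J] at hup
    exact (sub_le_self _ (h.pos (by positivity)).le).trans hup
  have hscale : (2 ^ (J + p))⁻¹ * x ≤ 2 * (2 ^ p)⁻¹ := by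
    rw [inv_mul_le_iff₀ (by positivity)]
    refine hxJ.trans_eq ?_
    rw [pow_add]
    field_simp
  have hratio : D * (2 ^ n)⁻¹ ≤ 1 / 2 := by
    rw [← div_eq_mul_inv, div_le_iff₀ (by positivity)]
    linarith
  calc dyadicIncr g (J + p) * ((2 ^ (J + p))⁻¹ * x) ^ n
      ≤ D ^ (p + 1) * g (2 ^ J) * (2 * (2 ^ p)⁻¹) ^ n := by gcongr
    _ = D * 2 ^ n * g (2 ^ J) * (D * (2 ^ n)⁻¹) ^ p := by
        rw [mul_pow, mul_pow, inv_pow, inv_pow, pow_right_comm]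
        ring
    _ ≤ D * 2 ^ n * g (2 ^ J) * (1 / 2) ^ p := by gcongr

lemma sum_range_dyadicIncr_mul_pow_le (h : MonotoneDoubling g D) (hD : 2 * D ≤ 2 ^ n) (J N : ℕ)
    (hx : 0 ≤ x) (hxJ : x ≤ 2 * 2 ^ J) :
    ∑ p ∈ Finset.range N, dyadicIncr g (J + p) * ((2 ^ (J + p))⁻¹ * x) ^ n ≤
      D * 2 ^ n * g (2 ^ J) * 2 := by
  have hD0 := zero_le_one.trans h.one_le
  have hg := h.pos (by positivity : (0 : ℝ) ≤ 2 ^ J)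
  calc _ ≤ ∑ p ∈ Finset.range N, D * 2 ^ n * g (2 ^ J) * (1 / 2) ^ p :=
        Finset.sum_le_sum fun p _ => h.dyadicIncr_mul_pow_le hD J p hx hxJ
    _ = D * 2 ^ n * g (2 ^ J) * ∑ p ∈ Finset.range N, (1 / 2) ^ p := by rw [Finset.mul_sum]
    _ ≤ _ := mul_le_mul_of_nonneg_left (sum_geometric_two_le N) (by positivity)

lemma tsum_dyadicIncr_mul_pow_lt_top (h : MonotoneDoubling g D) (hD : 2 * D ≤ 2 ^ n) :
    ∑' i, ENNReal.ofReal (dyadicIncr g i) * ENNReal.ofReal ((2 ^ i)⁻¹ ^ n) < ⊤ := by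
  refine (ENNReal.tsum_le_of_sum_range_le fun N => ?_).trans_lt
    (ENNReal.ofReal_lt_top (r := D * 2 ^ n * g 1 * 2))
  simp_rw [← ENNReal.ofReal_mul (h.dyadicIncr_nonneg _)]
  rw [← ENNReal.ofReal_sum_of_nonneg fun i _ => mul_nonneg (h.dyadicIncr_nonneg i) (by positivity)]
  refine ENNReal.ofReal_le_ofReal ?_
  simpa using h.sum_range_dyadicIncr_mul_pow_le hD 0 N zero_le_one (by norm_num)

/-- The scales `2 ^ (-i)` with `2 ^ i ≤ x` contribute at most `g (2 ^ J)` by telescoping, and those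
beyond form a geometric series. -/
lemma sum_range_dyadicIncr_mul_sat_pow_le (h : MonotoneDoubling g D) (hD : 2 * D ≤ 2 ^ n)
    (J N : ℕ) (hx : 0 ≤ x) (hxJ : x ≤ 2 * 2 ^ J) :
    ∑ i ∈ Finset.range N, dyadicIncr g i * sat (2 ^ i)⁻¹ x ^ n ≤
      (1 + 2 * (D * 2 ^ n)) * g (2 ^ J) := by
  have hl (i : ℕ) : (0 : ℝ) ≤ (2 ^ i)⁻¹ := by positivity
  have hhead : ∑ i ∈ Finset.range J, dyadicIncr g i * sat (2 ^ i)⁻¹ x ^ n ≤ g (2 ^ J) := by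
    calc _ ≤ ∑ i ∈ Finset.range J, dyadicIncr g i := Finset.sum_le_sum fun i _ =>
          mul_le_of_le_one_right (h.dyadicIncr_nonneg i)
            (pow_le_one₀ (sat_nonneg (hl i) hx) (sat_le_one _ x))
      _ = g (2 ^ J) - g 1 := sum_range_dyadicIncr g J
      _ ≤ g (2 ^ J) := sub_le_self _ (h.pos zero_le_one).le
  have htail : ∑ p ∈ Finset.range N, dyadicIncr g (J + p) * sat (2 ^ (J + p))⁻¹ x ^ n ≤
      D * 2 ^ n * g (2 ^ J) * 2 := by
    refine (Finset.sum_le_sum fun p _ => ?_).trans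
      (h.sum_range_dyadicIncr_mul_pow_le hD J N hx hxJ)
    exact mul_le_mul_of_nonneg_left
      (pow_le_pow_left₀ (sat_nonneg (hl _) hx) (sat_le_mul _ x) n) (h.dyadicIncr_nonneg _)
  calc _ ≤ ∑ i ∈ Finset.range (J + N), dyadicIncr g i * sat (2 ^ i)⁻¹ x ^ n :=
        Finset.sum_le_sum_of_subset_of_nonneg (Finset.range_mono (by lia)) fun i _ _ =>
          mul_nonneg (h.dyadicIncr_nonneg i) (sat_pow_nonneg (hl i) hx n)
    _ ≤ g (2 ^ J) + D * 2 ^ n * g (2 ^ J) * 2 := by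
        rw [Finset.sum_range_add]
        exact add_le_add hhead htail
    _ = _ := by ring

lemma exists_dyadicSeries_le (h : MonotoneDoubling g D) (hD : 2 * D ≤ 2 ^ n) :
    ∃ C : NNReal, ∀ x, 0 ≤ x → dyadicSeries g n x ≤ C * ENNReal.ofReal (g x) := by
  have hD0 := zero_le_one.trans h.one_le
  have hg0 := h.map_zero_pos
  have hg1 := h.pos zero_le_one
  refine ⟨((1 + 2 * (D * 2 ^ n)) * (g 1 / g 0)).toNNReal, fun x hx => ?_⟩
  obtain ⟨J, hxJ, hgJ⟩ : ∃ J : ℕ, x ≤ 2 * 2 ^ J ∧ g (2 ^ J) ≤ g 1 / g 0 * g x := by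
    rcases lt_or_ge x 1 with hx1 | hx1
    · refine ⟨0, by linarith, ?_⟩
      rw [pow_zero, div_mul_eq_mul_div, le_div_iff₀ hg0]
      exact mul_le_mul_of_nonneg_left (h.monotone hx) hg1.le
    · obtain ⟨J, hJx, hxJ⟩ := exists_nat_pow_near hx1 one_lt_two
      exact ⟨J, by rw [pow_succ] at hxJ; linarith, (h.monotone hJx).trans
        (le_mul_of_one_le_left (h.pos hx).le ((one_le_div hg0).2 (h.monotone zero_le_one)))⟩
  refine ENNReal.tsum_le_of_sum_range_le fun N => ?_
  simp_rw [← ENNReal.ofReal_mul (h.dyadicIncr_nonneg _)]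
  rw [← ENNReal.ofReal_sum_of_nonneg fun i _ =>
    mul_nonneg (h.dyadicIncr_nonneg i) (sat_pow_nonneg (by positivity) hx n)]
  calc _ ≤ ENNReal.ofReal ((1 + 2 * (D * 2 ^ n)) * (g 1 / g 0) * g x) := by
        refine ENNReal.ofReal_le_ofReal
          ((h.sum_range_dyadicIncr_mul_sat_pow_le hD J N hx hxJ).trans ?_)
        rw [mul_assoc]
        gcongr
    _ = _ := ENNReal.ofReal_mul (by positivity)

lemma mul_sub_le_sum_range_dyadicIncr_mul_sat_pow (h : MonotoneDoubling g D) (n : ℕ) {J : ℕ}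
    (hJx : 2 ^ J ≤ x) (hxJ : x ≤ 2 ^ (J + 1)) : (1 - Real.exp (-1)) ^ n * (g x - g 1) ≤
      ∑ i ∈ Finset.range (J + 1), dyadicIncr g i * sat (2 ^ i)⁻¹ x ^ n := by
  have he : 0 ≤ 1 - Real.exp (-1) := by simp
  calc (1 - Real.exp (-1)) ^ n * (g x - g 1)
      ≤ (1 - Real.exp (-1)) ^ n * (g (2 ^ (J + 1)) - g 1) := by
        gcongr
        exact h.monotone hxJ
    _ = ∑ i ∈ Finset.range (J + 1), dyadicIncr g i * (1 - Real.exp (-1)) ^ n := by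
        rw [← sum_range_dyadicIncr, ← Finset.sum_mul, mul_comm]
    _ ≤ _ := by
        refine Finset.sum_le_sum fun i hi => mul_le_mul_of_nonneg_left ?_ (h.dyadicIncr_nonneg i)
        have hix : 1 ≤ (2 ^ i)⁻¹ * x := by
          rw [le_inv_mul_iff₀ (by positivity), mul_one]
          exact (pow_le_pow_right₀ one_le_two (Nat.lt_succ_iff.1 (Finset.mem_range.1 hi))).trans hJx
        unfold sat
        gcongr

lemma exists_le_dyadicSeries (h : MonotoneDoubling g D) (n : ℕ) :
    ∃ C : NNReal, ∀ x, 0 ≤ x →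
      ENNReal.ofReal (g x) ≤ ENNReal.ofReal (g 1) + C * dyadicSeries g n x := by
  have he : 0 < (1 - Real.exp (-1)) ^ n := pow_pos (by simp) n
  refine ⟨((1 - Real.exp (-1)) ^ n)⁻¹.toNNReal, fun x hx => ?_⟩
  rcases lt_or_ge x 1 with hx1 | hx1
  · exact (ENNReal.ofReal_le_ofReal (h.monotone hx1.le)).trans le_self_add
  obtain ⟨J, hJx, hxJ⟩ := exists_nat_pow_near hx1 one_lt_two
  have hsum := h.mul_sub_le_sum_range_dyadicIncr_mul_sat_pow n hJx hxJ.le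
  set S := ∑ i ∈ Finset.range (J + 1), dyadicIncr g i * sat (2 ^ i)⁻¹ x ^ n with hS
  have hseries : ENNReal.ofReal S ≤ dyadicSeries g n x := by
    rw [hS, ENNReal.ofReal_sum_of_nonneg fun i _ =>
      mul_nonneg (h.dyadicIncr_nonneg i) (sat_pow_nonneg (by positivity) hx n)]
    simp_rw [ENNReal.ofReal_mul (h.dyadicIncr_nonneg _)]
    exact ENNReal.sum_le_tsum _
  calc ENNReal.ofReal (g x) ≤ ENNReal.ofReal (g 1 + ((1 - Real.exp (-1)) ^ n)⁻¹ * S) := by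
        refine ENNReal.ofReal_le_ofReal (sub_le_iff_le_add'.1 ?_)
        rwa [le_inv_mul_iff₀ he]
    _ ≤ ENNReal.ofReal (g 1) + ENNReal.ofReal (((1 - Real.exp (-1)) ^ n)⁻¹ * S) :=
        ENNReal.ofReal_add_le
    _ ≤ _ := by
        rw [ENNReal.ofReal_mul (by positivity)]
        gcongr
        rfl

lemma lintegral_dyadicSeries_lt_top_iff (h : MonotoneDoubling g D) (hD : 2 * D ≤ 2 ^ n)
    {ν : Measure ℝ} [IsFiniteMeasure ν] (hν : ∀ᵐ x ∂ν, 0 ≤ x) :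
    ∫⁻ x, dyadicSeries g n x ∂ν < ⊤ ↔ ∫⁻ x, ENNReal.ofReal (g x) ∂ν < ⊤ := by
  obtain ⟨C, hC⟩ := h.exists_dyadicSeries_le hD
  obtain ⟨C', hC'⟩ := h.exists_le_dyadicSeries n
  constructor <;> intro hfin
  · refine (lintegral_mono_ae (hν.mono hC')).trans_lt ?_
    rw [lintegral_add_left measurable_const, lintegral_const_mul _ (measurable_dyadicSeries g n),
      lintegral_const]
    finiteness
  · refine (lintegral_mono_ae (hν.mono hC)).trans_lt ?_
    rw [lintegral_const_mul' _ _ ENNReal.coe_ne_top]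
    finiteness

end MonotoneDoubling

end DyadicSeries

/-! ### Moments of doubling functions -/

section DoublingMoments

variable {φ : ℝ → ℝ} {β σ : ℝ} {m : Measure ℝ} {v : ℝ → ℝ → ℝ} {Q : ℝ → ℝ → Measure ℝ}
  {g : ℝ → ℝ} {D t x : ℝ}

lemma exists_two_mul_le_two_pow (D : ℝ) : ∃ n : ℕ, 2 * D ≤ 2 ^ (n + 2) := by
  obtain ⟨n, hn⟩ := pow_unbounded_of_one_lt (2 * D) (one_lt_two : (1 : ℝ) < 2)
  exact ⟨n, hn.le.trans (pow_le_pow_right₀ one_le_two (n.le_add_right 2))⟩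

lemma lintegral_le_add_of_le_add {ν : Measure ℝ} [IsProbabilityMeasure ν] {F G : ℝ → ENNReal}
    {B : NNReal} (hle : ∀ᵐ x ∂ν, F x ≤ G x + B) : ∫⁻ x, F x ∂ν ≤ ∫⁻ x, G x ∂ν + B := by
  simpa [lintegral_add_right] using lintegral_mono_ae hle

lemma lintegral_lt_top_of_le_add {ν : Measure ℝ} [IsFiniteMeasure ν] {F G : ℝ → ENNReal}
    {B : NNReal} (hle : ∀ᵐ x ∂ν, F x ≤ G x + B) (hG : ∫⁻ x, G x ∂ν < ⊤) :
    ∫⁻ x, F x ∂ν < ⊤ := by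
  refine (lintegral_mono_ae hle).trans_lt ?_
  rw [lintegral_add_right _ measurable_const, lintegral_const]
  finiteness

lemma ae_restrict_Ioi_one_nonneg (m : Measure ℝ) : ∀ᵐ z ∂m.restrict (Ioi 1), (0 : ℝ) ≤ z :=
  (ae_restrict_mem measurableSet_Ioi).mono fun _ (hz : 1 < _) => zero_le_one.trans hz.le

lemma IsBranchingMechanism.isFiniteMeasure_restrict_Ioi (hφ : IsBranchingMechanism φ β σ m) :
    IsFiniteMeasure (m.restrict (Ioi 1)) :=
  isFiniteMeasure_restrict.2 hφ.measure_Ioi_lt_top.ne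

lemma IsBranchingMechanism.ofReal_setIntegral_sat_pow (hφ : IsBranchingMechanism φ β σ m) {l : ℝ}
    (hl : 0 ≤ l) (n : ℕ) : ENNReal.ofReal (∫ z in Ioi 1, sat l z ^ n ∂m) =
      ∫⁻ z in Ioi 1, ENNReal.ofReal (sat l z ^ n) ∂m :=
  ofReal_integral_eq_lintegral_ofReal (hφ.integrableOn_sat_pow hl n)
    ((ae_restrict_Ioi_one_nonneg m).mono fun _ hz => sat_pow_nonneg hl hz n)

namespace IsCBSemigroup

lemma ofReal_integral_sat_pow (hQ : IsCBSemigroup v Q) (ht : 0 ≤ t) (hx : 0 ≤ x) {l : ℝ}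
    (hl : 0 ≤ l) (n : ℕ) : ENNReal.ofReal (∫ y, sat l y ^ n ∂Q t x) =
      ∫⁻ y, ENNReal.ofReal (sat l y ^ n) ∂Q t x :=
  ofReal_integral_eq_lintegral_ofReal (hQ.integrable_sat_pow ht hx hl n)
    ((hQ.ae_nonneg ht hx).mono fun _ hy => sat_pow_nonneg hl hy n)

lemma exists_lintegral_sat_pow_le (hQ : IsCBSemigroup v Q) (hφ : IsBranchingMechanism φ β σ m)
    (hv : IsCumulant φ v) (hm : IntegrableOn id (Ioi 1) m) (n : ℕ) (ht : 0 ≤ t) :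
    ∃ C : NNReal, ∀ l x, 0 < l → 0 ≤ x → ∫⁻ y, ENNReal.ofReal (sat l y ^ (n + 2)) ∂Q t x ≤
      C * (ENNReal.ofReal (sat l x ^ (n + 2)) + ENNReal.ofReal (l ^ (n + 2)) +
        ENNReal.ofReal x * ∫⁻ z in Ioi 1, ENNReal.ofReal (sat l z ^ (n + 2)) ∂m) := by
  obtain ⟨C, hC, hle⟩ := hQ.exists_integral_sat_pow_le hφ hv hm n ht
  refine ⟨C.toNNReal, fun l x hl hx => ?_⟩
  have hq := sat_pow_nonneg hl.le hx (n + 2)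
  have hM := setIntegral_sat_pow_nonneg m hl.le (n + 2)
  rw [← hQ.ofReal_integral_sat_pow ht hx hl.le, ← hφ.ofReal_setIntegral_sat_pow hl.le,
    ← ENNReal.ofReal_mul hx, ← ENNReal.ofReal_add hq (by positivity),
    ← ENNReal.ofReal_add (by positivity) (by positivity)]
  exact (ENNReal.ofReal_le_ofReal (hle l x hl hx)).trans_eq (ENNReal.ofReal_mul hC)

lemma exists_setLIntegral_sat_pow_le (hQ : IsCBSemigroup v Q) (hφ : IsBranchingMechanism φ β σ m)
    (hv : IsCumulant φ v) (n : ℕ) (ht : 0 < t) (hx : 0 < x) :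
    ∃ C : NNReal, ∀ l, 0 ≤ l → l ≤ 1 → ∫⁻ z in Ioi 1, ENNReal.ofReal (sat l z ^ (n + 2)) ∂m ≤
      C * (∫⁻ y, ENNReal.ofReal (sat l y ^ (n + 2)) ∂Q t x + ENNReal.ofReal (l ^ (n + 2))) := by
  obtain ⟨C, hC, hle⟩ := hQ.exists_setIntegral_sat_pow_le hφ hv n ht hx
  refine ⟨C.toNNReal, fun l hl hl1 => ?_⟩
  rw [← hQ.ofReal_integral_sat_pow ht.le hx.le hl, ← hφ.ofReal_setIntegral_sat_pow hl,
    ← ENNReal.ofReal_add (hQ.integral_sat_pow_nonneg ht.le hx.le hl _) (by positivity)]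
  exact (ENNReal.ofReal_le_ofReal (hle l hl hl1)).trans_eq (ENNReal.ofReal_mul hC)

lemma exists_lintegral_dyadicSeries_le (hQ : IsCBSemigroup v Q)
    (hφ : IsBranchingMechanism φ β σ m) (hv : IsCumulant φ v) (hm : IntegrableOn id (Ioi 1) m)
    (g : ℝ → ℝ) (n : ℕ) (ht : 0 ≤ t) :
    ∃ C : NNReal, ∀ x, 0 ≤ x → ∫⁻ y, dyadicSeries g (n + 2) y ∂Q t x ≤
      C * (dyadicSeries g (n + 2) x +
        (∑' i, ENNReal.ofReal (dyadicIncr g i) * ENNReal.ofReal ((2 ^ i)⁻¹ ^ (n + 2))) +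
        ENNReal.ofReal x * ∫⁻ z in Ioi 1, dyadicSeries g (n + 2) z ∂m) := by
  obtain ⟨C, hC⟩ := hQ.exists_lintegral_sat_pow_le hφ hv hm n ht
  refine ⟨C, fun x hx => ?_⟩
  rw [lintegral_dyadicSeries, lintegral_dyadicSeries, dyadicSeries, ← ENNReal.tsum_mul_left,
    ← ENNReal.tsum_add, ← ENNReal.tsum_add, ← ENNReal.tsum_mul_left]
  refine ENNReal.tsum_le_tsum fun i => ?_
  refine (mul_le_mul_right (hC (2 ^ i)⁻¹ x (by positivity) hx) _).trans_eq ?_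
  ring

lemma exists_setLIntegral_dyadicSeries_le (hQ : IsCBSemigroup v Q)
    (hφ : IsBranchingMechanism φ β σ m) (hv : IsCumulant φ v) (g : ℝ → ℝ) (n : ℕ) (ht : 0 < t)
    (hx : 0 < x) :
    ∃ C : NNReal, ∫⁻ z in Ioi 1, dyadicSeries g (n + 2) z ∂m ≤
      C * (∫⁻ y, dyadicSeries g (n + 2) y ∂Q t x +
        ∑' i, ENNReal.ofReal (dyadicIncr g i) * ENNReal.ofReal ((2 ^ i)⁻¹ ^ (n + 2))) := by
  obtain ⟨C, hC⟩ := hQ.exists_setLIntegral_sat_pow_le hφ hv n ht hx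
  refine ⟨C, ?_⟩
  rw [lintegral_dyadicSeries, lintegral_dyadicSeries, ← ENNReal.tsum_add, ← ENNReal.tsum_mul_left]
  refine ENNReal.tsum_le_tsum fun i => ?_
  refine (mul_le_mul_right (hC (2 ^ i)⁻¹ (by positivity)
    (inv_le_one_of_one_le₀ (one_le_pow₀ one_le_two))) _).trans_eq ?_
  ring

/-- Apply Markov's inequality to `exp (-X / x)`. -/
lemma exists_le_measure_Ioi_mul (hQ : IsCBSemigroup v Q) (hφ : IsBranchingMechanism φ β σ m)
    (hv : IsCumulant φ v) (ht : 0 ≤ t) :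
    ∃ δ p : ℝ, 0 < δ ∧ 0 < p ∧ ∀ x, 1 ≤ x → ENNReal.ofReal p ≤ Q t x (Ioi (δ * x)) := by
  obtain ⟨c, hc, hcv⟩ := hv.exists_mul_le hφ 1 t
  refine ⟨c / 2, 1 - Real.exp (-(c / 2)), by positivity, by simpa using hc, fun x hx1 => ?_⟩
  have hx : 0 < x := zero_lt_one.trans_le hx1
  have := hQ.isProbabilityMeasure ht hx.le
  have hlaplace : ∫ y, Real.exp (-(x⁻¹ * y)) ∂Q t x ≤
      Real.exp (-(c / 2)) * Real.exp (-(c / 2)) := by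
    rw [hQ.integral_exp ht hx.le (by positivity), ← Real.exp_add, Real.exp_le_exp]
    have := hcv x⁻¹ ⟨by positivity, inv_le_one_of_one_le₀ hx1⟩ t ⟨ht, le_rfl⟩
    rw [← div_eq_mul_inv, div_le_iff₀' hx] at this
    linarith
  have hmarkov := mul_meas_ge_le_integral_of_nonneg (ae_of_all _ fun y => (Real.exp_pos _).le)
    (integrable_exp_neg_mul (hQ.ae_nonneg ht hx.le) (by positivity : 0 ≤ x⁻¹)) (Real.exp (-(c / 2)))
  have hset : {y | Real.exp (-(c / 2)) ≤ Real.exp (-(x⁻¹ * y))} = Iic (c / 2 * x) := by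
    ext y
    rw [mem_ofPred_eq, Real.exp_le_exp, neg_le_neg_iff, mem_Iic, inv_mul_le_iff₀ hx, mul_comm x]
  rw [hset] at hmarkov
  have hIic := le_of_mul_le_mul_left (hmarkov.trans hlaplace) (Real.exp_pos _)
  rw [← compl_Iic, ENNReal.ofReal_le_iff_le_toReal (measure_ne_top _ _), ← measureReal_def,
    probReal_compl_eq_one_sub measurableSet_Iic]
  linarith

end IsCBSemigroup

namespace MonotoneDoubling

lemma setLIntegral_lt_top (h : MonotoneDoubling g D) (hφ : IsBranchingMechanism φ β σ m)
    (hv : IsCumulant φ v) (hQ : IsCBSemigroup v Q) (ht : 0 < t) (hx : 0 < x)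
    (hfin : ∫⁻ y, ENNReal.ofReal (g y) ∂Q t x < ⊤) :
    ∫⁻ z in Ioi 1, ENNReal.ofReal (g z) ∂m < ⊤ := by
  have := hQ.isProbabilityMeasure ht.le hx.le
  have := hφ.isFiniteMeasure_restrict_Ioi
  obtain ⟨n, hn⟩ := exists_two_mul_le_two_pow D
  obtain ⟨C, hC⟩ := hQ.exists_setLIntegral_dyadicSeries_le hφ hv g n ht hx
  rw [← h.lintegral_dyadicSeries_lt_top_iff hn (hQ.ae_nonneg ht.le hx.le)] at hfin
  rw [← h.lintegral_dyadicSeries_lt_top_iff hn (ae_restrict_Ioi_one_nonneg m)]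
  exact hC.trans_lt (ENNReal.mul_lt_top ENNReal.coe_lt_top
    (ENNReal.add_lt_top.2 ⟨hfin, h.tsum_dyadicIncr_mul_pow_lt_top hn⟩))

lemma exists_le_lintegral (h : MonotoneDoubling g D) (hφ : IsBranchingMechanism φ β σ m)
    (hv : IsCumulant φ v) (hQ : IsCBSemigroup v Q) (ht : 0 ≤ t) :
    ∃ C : NNReal, ∀ x, 0 ≤ x →
      ENNReal.ofReal (g x) ≤ ENNReal.ofReal (g 1) + C * ∫⁻ y, ENNReal.ofReal (g y) ∂Q t x := by
  obtain ⟨δ, p, hδ, hp, hle⟩ := hQ.exists_le_measure_Ioi_mul hφ hv ht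
  obtain ⟨N, hN⟩ := pow_unbounded_of_one_lt δ⁻¹ (one_lt_two : (1 : ℝ) < 2)
  have hD := zero_le_one.trans h.one_le
  refine ⟨(D ^ N * p⁻¹).toNNReal, fun x hx => ?_⟩
  rcases lt_or_ge x 1 with hx1 | hx1
  · exact (ENNReal.ofReal_le_ofReal (h.monotone hx1.le)).trans le_self_add
  refine le_trans ?_ le_add_self
  have hgx : g x ≤ D ^ N * g (δ * x) := by
    refine (h.monotone ?_).trans (h.map_two_pow_mul_le N (by positivity))
    rw [← mul_assoc]
    exact le_mul_of_one_le_left hx ((inv_le_iff_one_le_mul₀ hδ).1 hN.le)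
  calc ENNReal.ofReal (g x) ≤ ENNReal.ofReal (D ^ N * p⁻¹ * (g (δ * x) * p)) := by
        refine ENNReal.ofReal_le_ofReal (hgx.trans_eq ?_)
        field_simp
    _ = ENNReal.ofReal (D ^ N * p⁻¹) * (ENNReal.ofReal (g (δ * x)) * ENNReal.ofReal p) := by
        rw [ENNReal.ofReal_mul (by positivity), ENNReal.ofReal_mul (h.pos (by positivity)).le]
    _ ≤ ENNReal.ofReal (D ^ N * p⁻¹) * (ENNReal.ofReal (g (δ * x)) * Q t x (Ioi (δ * x))) := by
        gcongr
        exact hle x hx1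
    _ = ENNReal.ofReal (D ^ N * p⁻¹) * ∫⁻ _ in Ioi (δ * x), ENNReal.ofReal (g (δ * x)) ∂Q t x := by
        rw [setLIntegral_const]
    _ ≤ ENNReal.ofReal (D ^ N * p⁻¹) * ∫⁻ y in Ioi (δ * x), ENNReal.ofReal (g y) ∂Q t x :=
        mul_le_mul_right (setLIntegral_mono' measurableSet_Ioi fun y (hy : δ * x < y) =>
          ENNReal.ofReal_le_ofReal (h.monotone hy.le)) _
    _ ≤ _ := mul_le_mul_right (setLIntegral_le_lintegral _ _) _

lemma lintegral_ofReal_lt_top (h : MonotoneDoubling g D) {a : ℝ} (ha : ∀ x, 0 ≤ x → x ≤ a * g x)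
    {ν : Measure ℝ} (hν : ∀ᵐ x ∂ν, 0 ≤ x) (hfin : ∫⁻ x, ENNReal.ofReal (g x) ∂ν < ⊤) :
    ∫⁻ x, ENNReal.ofReal x ∂ν < ⊤ := by
  have hle : ∀ᵐ x ∂ν, ENNReal.ofReal x ≤ ENNReal.ofReal a * ENNReal.ofReal (g x) :=
    hν.mono fun x hx => (ENNReal.ofReal_le_ofReal (ha x hx)).trans_eq
      (ENNReal.ofReal_mul' (h.pos hx).le)
  refine (lintegral_mono_ae hle).trans_lt ?_
  rw [lintegral_const_mul' _ _ ENNReal.ofReal_ne_top]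
  finiteness

lemma integrableOn_id (h : MonotoneDoubling g D) {a : ℝ} (ha : ∀ x, 0 ≤ x → x ≤ a * g x)
    (hfin : ∫⁻ z in Ioi 1, ENNReal.ofReal (g z) ∂m < ⊤) : IntegrableOn id (Ioi 1) m := by
  have hpos := ae_restrict_Ioi_one_nonneg m
  exact ⟨measurable_id.aestronglyMeasurable, (hasFiniteIntegral_iff_ofReal (f := id) hpos).2
    (h.lintegral_ofReal_lt_top ha hpos hfin)⟩

variable {μ : Measure ℝ}

lemma lintegral_lintegral_lt_top (h : MonotoneDoubling g D) {a : ℝ}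
    (ha : ∀ x, 0 ≤ x → x ≤ a * g x) (hφ : IsBranchingMechanism φ β σ m) (hv : IsCumulant φ v)
    (hQ : IsCBSemigroup v Q) [IsFiniteMeasure μ] (hμ : ∀ᵐ x ∂μ, 0 ≤ x) (ht : 0 ≤ t)
    (hμg : ∫⁻ x, ENNReal.ofReal (g x) ∂μ < ⊤) (hmg : ∫⁻ z in Ioi 1, ENNReal.ofReal (g z) ∂m < ⊤) :
    ∫⁻ x, ∫⁻ y, ENNReal.ofReal (g y) ∂Q t x ∂μ < ⊤ := by
  have := hφ.isFiniteMeasure_restrict_Ioi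
  obtain ⟨n, hn⟩ := exists_two_mul_le_two_pow D
  obtain ⟨C, hC⟩ := hQ.exists_lintegral_dyadicSeries_le hφ hv (h.integrableOn_id ha hmg) g n ht
  obtain ⟨C', hC'⟩ := h.exists_le_dyadicSeries (n + 2)
  have hμx := h.lintegral_ofReal_lt_top ha hμ hμg
  have hS := h.tsum_dyadicIncr_mul_pow_lt_top hn
  rw [← h.lintegral_dyadicSeries_lt_top_iff hn hμ] at hμg
  rw [← h.lintegral_dyadicSeries_lt_top_iff hn (ae_restrict_Ioi_one_nonneg m)] at hmg
  have hinner : ∀ᵐ x ∂μ, ∫⁻ y, ENNReal.ofReal (g y) ∂Q t x ≤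
      C' * ∫⁻ y, dyadicSeries g (n + 2) y ∂Q t x + (g 1).toNNReal := hμ.mono fun x hx => by
    have := hQ.isProbabilityMeasure ht hx
    rw [← lintegral_const_mul _ (measurable_dyadicSeries g _)]
    exact lintegral_le_add_of_le_add ((hQ.ae_nonneg ht hx).mono fun y hy =>
      (hC' y hy).trans_eq (add_comm _ _))
  refine lintegral_lt_top_of_le_add hinner ?_
  rw [lintegral_const_mul' _ _ ENNReal.coe_ne_top]
  refine ENNReal.mul_lt_top ENNReal.coe_lt_top ((lintegral_mono_ae (hμ.mono hC)).trans_lt ?_)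
  rw [lintegral_const_mul' _ _ ENNReal.coe_ne_top,
    lintegral_add_right _ (ENNReal.measurable_ofReal.mul_const _),
    lintegral_add_right _ measurable_const, lintegral_const,
    lintegral_mul_const _ ENNReal.measurable_ofReal]
  finiteness

theorem lintegral_lintegral_lt_top_iff (h : MonotoneDoubling g D) {a : ℝ}
    (ha : ∀ x, 0 ≤ x → x ≤ a * g x) (hφ : IsBranchingMechanism φ β σ m) (hv : IsCumulant φ v)
    (hQ : IsCBSemigroup v Q) [IsFiniteMeasure μ] (hμ : ∀ᵐ x ∂μ, 0 ≤ x) (hμpos : μ (Ioi 0) ≠ 0)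
    (ht : 0 < t) : ∫⁻ x, ∫⁻ y, ENNReal.ofReal (g y) ∂Q t x ∂μ < ⊤ ↔
      ∫⁻ x, ENNReal.ofReal (g x) ∂μ < ⊤ ∧ ∫⁻ z in Ioi 1, ENNReal.ofReal (g z) ∂m < ⊤ := by
  refine ⟨fun hfin => ⟨?_, ?_⟩, fun hfin =>
    h.lintegral_lintegral_lt_top ha hφ hv hQ hμ ht.le hfin.1 hfin.2⟩
  · obtain ⟨C, hC⟩ := h.exists_le_lintegral hφ hv hQ ht.le
    refine lintegral_lt_top_of_le_add (B := (g 1).toNNReal)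
      (hμ.mono fun x hx => (hC x hx).trans_eq (add_comm _ _)) ?_
    rw [lintegral_const_mul' _ _ ENNReal.coe_ne_top]
    finiteness
  · by_contra hm
    have htop : ∀ x ∈ Ioi (0 : ℝ), (⊤ : ENNReal) ≤ ∫⁻ y, ENNReal.ofReal (g y) ∂Q t x :=
      fun x hx => top_le_iff.2 (not_lt_top_iff.1 (mt (h.setLIntegral_lt_top hφ hv hQ ht hx) hm))
    have hle := (setLIntegral_mono' measurableSet_Ioi htop).trans
      (setLIntegral_le_lintegral (μ := μ) (Ioi 0) _)
    rw [setLIntegral_const, ENNReal.top_mul hμpos] at hle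
    exact hfin.not_ge hle

end MonotoneDoubling

end DoublingMoments

/-! ### Convex moment functions -/

section Convex

variable {f : ℝ → ℝ} {b c s D M : ℝ}

lemma antitoneOn_or_exists_add_mul_sub_le (hconv : ConvexOn ℝ (Ici c) f) :
    AntitoneOn f (Ici c) ∨
      ∃ b s, c ≤ b ∧ 0 < s ∧ ∀ x y, b ≤ x → x ≤ y → f x + s * (y - x) ≤ f y := by
  rw [or_iff_not_imp_left]
  intro hanti
  simp only [AntitoneOn, not_forall, not_le] at hanti
  obtain ⟨a, ha, b, hb, hab, hfab⟩ := hanti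
  have hab : a < b := hab.lt_of_ne (by rintro rfl; exact hfab.false)
  refine ⟨b, (f b - f a) / (b - a), hb, div_pos (sub_pos.2 hfab) (sub_pos.2 hab),
    fun x y hbx hxy => ?_⟩
  rcases hxy.eq_or_lt with rfl | hxy
  · simp
  have hx : x ∈ Ici c := le_trans hb hbx
  have hy : y ∈ Ici c := le_trans hx hxy.le
  have hslope : (f b - f a) / (b - a) ≤ (f y - f x) / (y - x) := by
    rcases hbx.eq_or_lt with rfl | hbx
    · exact hconv.slope_mono_adjacent ha hy hab hxy
    · exact (hconv.slope_mono_adjacent ha hx hab hbx).trans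
        (hconv.slope_mono_adjacent hb hy hbx hxy)
  rw [le_div_iff₀ (sub_pos.2 hxy)] at hslope
  linarith

lemma monotoneDoubling_comp_max (hb : 0 ≤ b) (hmono : MonotoneOn f (Ici b)) (hpos : 0 < f b)
    (hdbl : ∀ x, b ≤ x → f (2 * x) ≤ D * f x) : MonotoneDoubling (fun x => f (max x b)) D where
  monotone x y hxy := hmono (mem_Ici.2 (le_max_right _ _)) (mem_Ici.2 (le_max_right _ _))
    (max_le_max_right b hxy)
  map_zero_pos := by rwa [max_eq_right hb]
  map_two_mul_le x _ := by
    have hmax : b ≤ max x b := le_max_right _ _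
    have hle : max (2 * x) b ≤ 2 * max x b := by
      rw [mul_max_of_nonneg _ _ zero_le_two]
      exact max_le_max_left _ (by linarith)
    exact (hmono (mem_Ici.2 (le_max_right _ _)) (mem_Ici.2 ((le_max_right _ _).trans hle))
      hle).trans (hdbl _ hmax)

lemma exists_le_mul_comp_max (hb : 0 ≤ b) (hs : 0 < s) (hpos : 0 < f b)
    (hgrowth : ∀ x, b ≤ x → f b + s * (x - b) ≤ f x) : ∃ a, ∀ x, x ≤ a * f (max x b) := by
  refine ⟨b / f b + 1 / s, fun x => ?_⟩
  have hmax : b ≤ max x b := le_max_right _ _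
  calc x ≤ max x b := le_max_left _ _
    _ = b / f b * f b + 1 / s * (s * (max x b - b)) := by field_simp; ring
    _ ≤ b / f b * (f b + s * (max x b - b)) + 1 / s * (f b + s * (max x b - b)) := by
        have := sub_nonneg.2 hmax
        have hf := le_add_of_nonneg_right (a := f b) (mul_nonneg hs.le this)
        have hmul := le_add_of_nonneg_left (a := s * (max x b - b)) hpos.le
        gcongr
    _ ≤ _ := by
        rw [← add_mul]
        exact mul_le_mul_of_nonneg_left (hgrowth _ hmax) (by positivity)

/-- The moment function is replaced by a constant on an initial interval. -/
lemma exists_monotoneDoubling_of_not_antitoneOn (hconv : ConvexOn ℝ (Ici c) f)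
    (hdbl : ∀ᶠ x in atTop, f (2 * x) ≤ D * f x) (hbdd : ∀ x, 0 ≤ x → x < c → f x ≤ M)
    (hanti : ¬ AntitoneOn f (Ici c)) :
    ∃ (g : ℝ → ℝ) (a : ℝ) (B : NNReal), MonotoneDoubling g D ∧ (∀ x, x ≤ a * g x) ∧
      (∀ x, 0 ≤ x → ENNReal.ofReal (f x) ≤ ENNReal.ofReal (g x) + B) ∧
      ∀ x, ENNReal.ofReal (g x) ≤ ENNReal.ofReal (f x) + B := by
  obtain ⟨b₀, s, hcb₀, hs, hgrowth⟩ :=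
    (antitoneOn_or_exists_add_mul_sub_le hconv).resolve_left hanti
  obtain ⟨b₁, hb₁⟩ := eventually_atTop.1 hdbl
  obtain ⟨b, hb⟩ := ((eventually_ge_atTop 0).and ((eventually_ge_atTop b₀).and
    ((eventually_ge_atTop b₁).and (eventually_gt_atTop (b₀ - f b₀ / s))))).exists
  obtain ⟨hb, hb₀b, hb₁b, hbs⟩ := hb
  have hpos : 0 < f b := by
    refine lt_of_lt_of_le ?_ (hgrowth b₀ b le_rfl hb₀b)
    have := (lt_div_iff₀ hs).1 (sub_lt_comm.1 hbs)
    linarith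
  have hmono : MonotoneOn f (Ici b) := fun x hx y _ hxy =>
    (le_add_of_nonneg_right (mul_nonneg hs.le (sub_nonneg.2 hxy))).trans
      (hgrowth x y (hb₀b.trans hx) hxy)
  obtain ⟨a, ha⟩ := exists_le_mul_comp_max hb hs hpos fun x hx => hgrowth b x hb₀b hx
  have hM : ∀ x, 0 ≤ x → x ≤ b → f x ≤ max M (max (f c) (f b)) := fun x hx hxb => by
    rcases lt_or_ge x c with hxc | hcx
    · exact (hbdd x hx hxc).trans (le_max_left _ _)
    · exact (hconv.le_max_of_mem_Icc self_mem_Ici (hcb₀.trans hb₀b) ⟨hcx, hxb⟩).trans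
        (le_max_right _ _)
  refine ⟨fun x => f (max x b), a, (max M (max (f c) (f b))).toNNReal,
    monotoneDoubling_comp_max hb hmono hpos fun x hx => hb₁ x (hb₁b.trans hx), ha,
    fun x hx => ?_, fun x => ?_⟩
  · rcases le_total x b with hxb | hbx
    · exact (ENNReal.ofReal_le_ofReal (hM x hx hxb)).trans le_add_self
    · simp only [max_eq_left hbx, le_self_add]
  · rcases le_total x b with hxb | hbx
    · simp only [max_eq_right hxb]
      exact (ENNReal.ofReal_le_ofReal (hM b hb le_rfl)).trans le_add_self
    · simp only [max_eq_left hbx, le_self_add]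

lemma ConditionA.exists_eventually_map_two_mul_le (hf : ConditionA f) :
    ∃ D, ∀ᶠ x in atTop, f (2 * x) ≤ D * f x := by
  obtain ⟨-, -, c, hc, K, -, hconv, hmul, -⟩ := hf
  rcases antitoneOn_or_exists_add_mul_sub_le hconv with hanti | ⟨b, s, -, hs, hgrowth⟩
  · refine ⟨1, (eventually_ge_atTop c).mono fun x hx => ?_⟩
    rw [one_mul]
    exact hanti hx (by rw [mem_Ici]; linarith) (by linarith)
  · refine ⟨K * f (max 2 c), ?_⟩
    filter_upwards [eventually_ge_atTop b, eventually_ge_atTop c] with x hbx hcx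
    have hle : 2 * x ≤ max 2 c * x := by
      gcongr
      exacts [hc.trans hcx, le_max_left _ _]
    have hincr := hgrowth (2 * x) (max 2 c * x) (by linarith) hle
    have := mul_nonneg hs.le (sub_nonneg.2 hle)
    linarith [hmul (max 2 c) x (le_max_right _ _) hcx]

end Convex

/-! ### The moment criterion -/

lemma IsCBSemigroup.lintegral_lintegral_lt_top_of_le_add {v : ℝ → ℝ → ℝ} {Q : ℝ → ℝ → Measure ℝ}
    {μ : Measure ℝ} [IsFiniteMeasure μ] {F G : ℝ → ENNReal} {B : NNReal} {t : ℝ}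
    (hQ : IsCBSemigroup v Q) (hμ : ∀ᵐ x ∂μ, 0 ≤ x) (ht : 0 ≤ t) (hle : ∀ x, 0 ≤ x → F x ≤ G x + B)
    (hG : ∫⁻ x, ∫⁻ y, G y ∂Q t x ∂μ < ⊤) : ∫⁻ x, ∫⁻ y, F y ∂Q t x ∂μ < ⊤ :=
  lintegral_lt_top_of_le_add (hμ.mono fun _ hx =>
    have := hQ.isProbabilityMeasure ht hx
    lintegral_le_add_of_le_add ((hQ.ae_nonneg ht hx).mono hle)) hG

theorem cb_f_moment_criterion_general {f : ℝ → ℝ} {c D M : ℝ} (hconv : ConvexOn ℝ (Ici c) f)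
    (hdbl : ∀ᶠ x in atTop, f (2 * x) ≤ D * f x) (hbdd : ∀ x, 0 ≤ x → x < c → f x ≤ M)
    {φ : ℝ → ℝ} {β σ : ℝ} {m : Measure ℝ} (hφ : IsBranchingMechanism φ β σ m)
    {v : ℝ → ℝ → ℝ} (hv : IsCumulant φ v) {Q : ℝ → ℝ → Measure ℝ} (hQ : IsCBSemigroup v Q)
    {μ : Measure ℝ} [IsFiniteMeasure μ] (hμ0 : μ (Iio 0) = 0) (hμpos : 0 < μ (Ioi 0))
    {t : ℝ} (ht : 0 < t) :
    ∫⁻ x, ∫⁻ y, ENNReal.ofReal (f y) ∂Q t x ∂μ < ⊤ ↔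
      ∫⁻ x, ENNReal.ofReal (f x) ∂μ < ⊤ ∧ ∫⁻ z in Ioi 1, ENNReal.ofReal (f z) ∂m < ⊤ := by
  have := hφ.isFiniteMeasure_restrict_Ioi
  have hμ := ae_nonneg_of_measure_Iio_eq_zero hμ0
  have hm := ae_restrict_Ioi_one_nonneg m
  by_cases hanti : AntitoneOn f (Ici c)
  · have hle : ∀ x, 0 ≤ x → ENNReal.ofReal (f x) ≤ 0 + (max M (f c)).toNNReal := fun x hx => by
      rw [zero_add]
      refine ENNReal.ofReal_le_ofReal ?_
      rcases lt_or_ge x c with hxc | hcx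
      · exact (hbdd x hx hxc).trans (le_max_left _ _)
      · exact (hanti self_mem_Ici hcx hcx).trans (le_max_right _ _)
    exact iff_of_true (hQ.lintegral_lintegral_lt_top_of_le_add hμ ht.le hle (by simp))
      ⟨lintegral_lt_top_of_le_add (hμ.mono hle) (by simp),
        lintegral_lt_top_of_le_add (hm.mono hle) (by simp)⟩
  · obtain ⟨g, a, B, hg, ha, hfg, hgf⟩ :=
      exists_monotoneDoubling_of_not_antitoneOn hconv hdbl hbdd hanti
    have hgf' : ∀ x, 0 ≤ x → ENNReal.ofReal (g x) ≤ ENNReal.ofReal (f x) + B := fun x _ => hgf x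
    calc _ ↔ ∫⁻ x, ∫⁻ y, ENNReal.ofReal (g y) ∂Q t x ∂μ < ⊤ :=
          ⟨hQ.lintegral_lintegral_lt_top_of_le_add hμ ht.le hgf',
            hQ.lintegral_lintegral_lt_top_of_le_add hμ ht.le hfg⟩
      _ ↔ _ := hg.lintegral_lintegral_lt_top_iff (fun x _ => ha x) hφ hv hQ hμ hμpos.ne' ht
      _ ↔ _ := and_congr
          ⟨lintegral_lt_top_of_le_add (hμ.mono hfg), lintegral_lt_top_of_le_add (hμ.mono hgf')⟩
          ⟨lintegral_lt_top_of_le_add (hm.mono hfg), lintegral_lt_top_of_le_add (hm.mono hgf')⟩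

/-- Theorem 2.1: for a CB-process with branching mechanism `φ` (Lévy measure
`m`) satisfying Grey's condition and initial law `μ` with `μ((0,∞)) > 0`,
for every `t > 0` the `f`-moment at time `t` is finite iff the `f`-moment of
`μ` is finite and `∫_{(1,∞)} f(z) m(dz) < ∞`. -/
theorem cb_f_moment_criterion
    (f : ℝ → ℝ) (hf : ConditionA f)
    (φ : ℝ → ℝ) (β σ : ℝ) (m : Measure ℝ)
    (hφ : IsBranchingMechanism φ β σ m) (hGrey : GreyCondition φ)
    (v : ℝ → ℝ → ℝ) (hv : IsCumulant φ v)
    (Q : ℝ → ℝ → Measure ℝ) (hQ : IsCBSemigroup v Q)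
    (μ : Measure ℝ) (hμ : IsProbabilityMeasure μ)
    (hμ0 : μ (Set.Iio 0) = 0) (hμpos : 0 < μ (Set.Ioi 0))
    (t : ℝ) (ht : 0 < t) :
    (∫⁻ x, (∫⁻ y, ENNReal.ofReal (f y) ∂(Q t x)) ∂μ) < ⊤ ↔
      ((∫⁻ x, ENNReal.ofReal (f x) ∂μ) < ⊤ ∧
        (∫⁻ z in Set.Ioi 1, ENNReal.ofReal (f z) ∂m) < ⊤) := by
  obtain ⟨D, hdbl⟩ := hf.exists_eventually_map_two_mul_le
  obtain ⟨-, -, c, -, K, -, hconv, -, M, hbdd⟩ := hf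
  exact cb_f_moment_criterion_general hconv hdbl hbdd hφ hv hQ hμ0 hμpos ht
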